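/- arXiv:math/0001068 — 3 statements merged into one kernel-verified Lean document; each statement's English description precedes it below -/
import Mathlib

section
/- Under the hypotheses of the preceding statement (𝒪 polynomial ring over a field of characteristic zero; 𝔥 ⊆ 𝔤 complete intersections of grades p, n; 𝒪/𝔤 reduced with connected Spec; localizations of 𝒪/𝔥 at minimal primes of 𝔤 regular; 𝔤 = (g₁,…,g_n) with g₁,…,g_n an 𝒪-regular sequence and generators h₁,…,h_p of 𝔥 with h_i ≡ Σ_{j=1}^p b_{ij} g_j mod 𝔤²), for every associated prime 𝔭 of 𝒪/𝔤 the images of g_{p+1},…,g_n in (𝒪/𝔥)_𝔭̄ form an (𝒪/𝔥)_𝔭̄-regular sequence and generate the localized ideal (𝔤/𝔥)_𝔭̄. -/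
open Ideal

/-- `ξ ∈ Der_h(O)`: the derivation `ξ` preserves the ideal `h`. -/
def PreservesIdeal {k O : Type*} [CommRing k] [CommRing O] [Algebra k O]
    (h : Ideal O) (xi : Derivation k O O) : Prop :=
  ∀ x ∈ h, xi x ∈ h

/-- The primitive ideal `∫_h g` of `g` relative to `h`: all `f ∈ g` such that
`ξ f ∈ g` for every derivation `ξ` preserving `h`. -/
def primitiveIdeal (k : Type*) {O : Type*} [CommRing k] [CommRing O] [Algebra k O]
    (h g : Ideal O) : Ideal O where
  carrier := {f | f ∈ g ∧ ∀ xi : Derivation k O O, PreservesIdeal h xi → xi f ∈ g}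
  add_mem' := fun {a b} ha hb =>
    ⟨g.add_mem ha.1 hb.1, fun xi hxi => by
      rw [map_add]; exact g.add_mem (ha.2 xi hxi) (hb.2 xi hxi)⟩
  zero_mem' := ⟨g.zero_mem, fun xi _ => by simp⟩
  smul_mem' := fun c f hf =>
    ⟨g.smul_mem c hf.1, fun xi hxi => by
      rw [smul_eq_mul, Derivation.leibniz]
      exact g.add_mem (g.smul_mem _ (hf.2 xi hxi))
        (by rw [smul_eq_mul]; exact Ideal.mul_mem_right _ g hf.1)⟩

/-- The set of elements of `g` whose class in the conormal module `M = g/(g² + h)` is a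
torsion element over `O/g`, i.e. is killed by a non-zero-divisor of `O/g`.  This is the
preimage in `O` of the torsion submodule `T(M)` of `M`. -/
def torsionSet {O : Type*} [CommRing O] (h g : Ideal O) : Set O :=
  {f | f ∈ g ∧ ∃ β : O,
    Ideal.Quotient.mk g β ∈ nonZeroDivisors (O ⧸ g) ∧ β * f ∈ g ^ 2 ⊔ h}

/-- A regular local ring: a noetherian local ring whose maximal ideal can be generated by
Krull-dimension many elements. -/
def IsRegularLocal (R : Type*) [CommRing R] : Prop :=
  IsNoetherianRing R ∧ IsLocalRing R ∧ ∃ s : Finset R,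
    (Ideal.span (s : Set R)).IsMaximal ∧ (s.card : WithBot ℕ∞) = ringKrullDim R

/-- The localization of `R` at a prime ideal (with the primality assumption explicit). -/
abbrev locAt {R : Type*} [CommRing R] (q : Ideal R) (hq : q.IsPrime) : Type _ :=
  @Localization.AtPrime R _ q hq

/-- The localization of `O/h` at the image of the prime `p` is a regular local ring. -/
def regularAtImage {O : Type*} [CommRing O] (h p : Ideal O) : Prop :=
  ∀ hP : (p.map (Ideal.Quotient.mk h)).IsPrime,
    IsRegularLocal (locAt (p.map (Ideal.Quotient.mk h)) hP)

/-- The `(t+1)`-st through `n`-th members `g_{t+1}, …, g_n` of a family `g_1, …, g_n`. -/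
def tailFam {O : Type*} {n : ℕ} (gs : Fin n → O) (t : ℕ) (j : Fin (n - t)) : O :=
  gs ⟨t + (j : ℕ), by have := j.isLt; omega⟩

/-- The images of `g_{t+1}, …, g_n` in the localization of `O/h` at the image of the
prime `p` form a regular sequence and generate the localization of `g/h` there, i.e. they
generate it as a complete intersection ideal. -/
def generatesAsCI {O : Type*} [CommRing O] (h g : Ideal O) {n : ℕ}
    (gs : Fin n → O) (t : ℕ) (p : Ideal O) : Prop :=
  ∀ hP : (p.map (Ideal.Quotient.mk h)).IsPrime,
    RingTheory.Sequence.IsRegular (locAt (p.map (Ideal.Quotient.mk h)) hP)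
      (List.ofFn fun j : Fin (n - t) =>
        algebraMap (O ⧸ h) (locAt (p.map (Ideal.Quotient.mk h)) hP)
          (Ideal.Quotient.mk h (tailFam gs t j))) ∧
    Ideal.span (Set.range fun j : Fin (n - t) =>
        algebraMap (O ⧸ h) (locAt (p.map (Ideal.Quotient.mk h)) hP)
          (Ideal.Quotient.mk h (tailFam gs t j))) =
      (g.map (Ideal.Quotient.mk h)).map
        (algebraMap (O ⧸ h) (locAt (p.map (Ideal.Quotient.mk h)) hP))

open IsLocalRing RingTheory.Sequence

theorem Ideal.exists_add_notMem_of_antichain {R : Type*} [CommRing R] (x : R) (J : Ideal R)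
    (S : Finset (Ideal R)) (hprime : ∀ q ∈ S, q.IsPrime)
    (hanti : ∀ q ∈ S, ∀ q' ∈ S, q ≤ q' → q = q')
    (hnot : ∀ q ∈ S, ¬ Ideal.span {x} ⊔ J ≤ q) :
    ∃ y ∈ J, ∀ q ∈ S, x + y ∉ q := by
  classical
  induction S using Finset.induction_on with
  | empty => exact ⟨0, J.zero_mem, by simp⟩
  | insert q S hq ih =>
    obtain ⟨y, hyJ, hy⟩ := ih (fun r hr => hprime r (Finset.mem_insert_of_mem hr))
      (fun r hr r' hr' => hanti r (Finset.mem_insert_of_mem hr) r' (Finset.mem_insert_of_mem hr'))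
      (fun r hr => hnot r (Finset.mem_insert_of_mem hr))
    by_cases hxy : x + y ∈ q
    · have hqp : q.IsPrime := hprime q (Finset.mem_insert_self q S)
      have hprod : ¬ J * ∏ r ∈ S, r ≤ q := by
        rw [hqp.mul_le, not_or, hqp.prod_le]
        refine ⟨fun hJ => hnot q (Finset.mem_insert_self q S) (sup_le ?_ hJ), ?_⟩
        · rw [Ideal.span_singleton_le_iff_mem]
          exact (q.add_mem_iff_left (hJ hyJ)).mp hxy
        · rintro ⟨r, hr, hrq⟩
          exact hq (hanti r (Finset.mem_insert_of_mem hr) q (Finset.mem_insert_self q S) hrq ▸ hr)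
      obtain ⟨z, hz, hzq⟩ := SetLike.not_le_iff_exists.mp hprod
      obtain ⟨hzJ, hzprod⟩ := Submodule.mem_inf.mp (Ideal.mul_le_inf hz)
      have hzS : ∀ r ∈ S, z ∈ r := fun r hr =>
        Finset.inf_le (f := id) hr (Ideal.prod_le_inf hzprod)
      refine ⟨y + z, J.add_mem hyJ hzJ, fun r hr => ?_⟩
      rw [← add_assoc]
      rcases Finset.mem_insert.mp hr with rfl | hr
      · rwa [Ideal.add_mem_iff_right _ hxy]
      · rw [Ideal.add_mem_iff_left _ (hzS r hr)]
        exact hy r hr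
    · exact ⟨y, hyJ, fun r hr => (Finset.mem_insert.mp hr).elim (fun h => h ▸ hxy) (hy r)⟩

section

variable {R : Type*} [CommRing R] [IsLocalRing R] [IsNoetherianRing R]

theorem ringKrullDim_le_length_of_isMaximal_ofList {rs : List R} (h : (ofList rs).IsMaximal) :
    ringKrullDim R ≤ rs.length := by
  classical
  refine (ringKrullDim_le_spanFinrank_maximalIdeal R).trans ?_
  rw [← IsLocalRing.eq_maximalIdeal h]
  have : {r | r ∈ rs} = (rs.toFinset : Set R) := by ext; simp
  rw [Ideal.ofList, this]
  refine Nat.cast_le.mpr ((Submodule.spanFinrank_span_le_ncard_of_finite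
    (Finset.finite_toSet _)).trans ?_)
  rw [Set.ncard_coe_finset]
  exact List.toFinset_card_le rs

theorem quotient_span_singleton_of_isMaximal_ofList {x : R} {rs : List R}
    (h : (ofList (x :: rs)).IsMaximal) (hdim : ringKrullDim R = (x :: rs).length) :
    IsLocalRing (R ⧸ span {x}) ∧
      (ofList (rs.map (Ideal.Quotient.mk (span {x})))).IsMaximal ∧
      ringKrullDim (R ⧸ span {x}) = (rs.map (Ideal.Quotient.mk (span {x}))).length := by
  have hx : x ∈ maximalIdeal R := by
    rw [← IsLocalRing.eq_maximalIdeal h]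
    exact Ideal.subset_span (by simp)
  have : Nontrivial (R ⧸ span {x}) := Ideal.Quotient.nontrivial_iff.mpr fun H =>
    (maximalIdeal.isMaximal R).ne_top (top_le_iff.mp (H ▸ (span_singleton_le_iff_mem _).mpr hx))
  have hloc : IsLocalRing (R ⧸ span {x}) :=
    IsLocalRing.of_surjective' (Ideal.Quotient.mk _) Ideal.Quotient.mk_surjective
  have hmax : (ofList (rs.map (Ideal.Quotient.mk (span {x})))).IsMaximal := by
    have := Ideal.IsMaximal.map_of_surjective_of_ker_le
      (Ideal.Quotient.mk_surjective (I := span {x})) (m := ofList (x :: rs))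
      (by rw [Ideal.mk_ker, ofList_cons]; exact le_sup_left)
    rwa [map_ofList, List.map_cons, ofList_cons,
      Ideal.Quotient.eq_zero_iff_mem.mpr (mem_span_singleton_self x), span_singleton_eq_bot.mpr rfl,
      bot_sup_eq] at this
  refine ⟨hloc, hmax, le_antisymm (ringKrullDim_le_length_of_isMaximal_ofList hmax) ?_⟩
  have hle := ringKrullDim_le_ringKrullDim_quotient_add_card (R := R) {x}
    (by simpa [ringJacobson_eq_maximalIdeal R] using hx)
  rw [hdim, Finset.coe_singleton] at hle
  simp only [List.length_cons, Nat.cast_add, Nat.cast_one,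
    Finset.card_singleton, List.length_map] at hle ⊢
  exact ENat.WithBot.add_le_add_one_right_iff.mp hle

end

theorem isDomain_of_isMaximal_ofList {R : Type*} [CommRing R] [IsLocalRing R] [IsNoetherianRing R]
    {rs : List R} (h : (ofList rs).IsMaximal) (hdim : ringKrullDim R = rs.length) :
    IsDomain R := by
  induction hn : rs.length generalizing R with
  | zero =>
    obtain rfl := List.length_eq_zero_iff.mp hn
    rw [ofList_nil] at h
    have := h.isPrime
    exact IsDomain.of_bot_isPrime R
  | succ d ih =>
    obtain ⟨x, rs, rfl⟩ := List.exists_cons_of_length_eq_add_one hn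
    have hfin := minimalPrimes.finite_of_isNoetherianRing R
    obtain ⟨y, hy, hxy⟩ := Ideal.exists_add_notMem_of_antichain x (ofList rs) hfin.toFinset
      (fun q hq => (hfin.mem_toFinset.mp hq).isPrime)
      (fun q hq q' hq' hle => le_antisymm hle
        ((hfin.mem_toFinset.mp hq').2 (hfin.mem_toFinset.mp hq).1 hle))
      (fun q hq hle => by
        rw [← ofList_cons] at hle
        have hmin := hfin.mem_toFinset.mp hq
        have := hmin.isPrime
        have hqm : q = maximalIdeal R := le_antisymm (le_maximalIdeal this.ne_top)
          (IsLocalRing.eq_maximalIdeal h ▸ hle)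
        have h0 : (maximalIdeal R).height = 0 := by
          rw [← hqm, Ideal.height_eq_zero_iff]
          exact hmin
        have := maximalIdeal_height_eq_ringKrullDim (R := R)
        rw [h0, hdim, hn] at this
        norm_cast at this)
    have hmax : (ofList ((x + y) :: rs)).IsMaximal := by
      convert h using 1
      rw [ofList_cons, ofList_cons]
      apply le_antisymm <;> refine sup_le ((span_singleton_le_iff_mem _).mpr ?_) le_sup_right
      · exact add_mem (Ideal.mem_sup_left (mem_span_singleton_self x)) (Ideal.mem_sup_right hy)
      · have := sub_mem (Ideal.mem_sup_left (mem_span_singleton_self (x + y)))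
          (Ideal.mem_sup_right hy : y ∈ span {x + y} ⊔ ofList rs)
        simpa using this
    obtain ⟨hloc, hmax', hdim'⟩ :=
      quotient_span_singleton_of_isMaximal_ofList hmax (by simpa using hdim)
    have hdom := ih hmax' hdim' (by simpa using hn)
    rw [Ideal.Quotient.isDomain_iff_prime] at hdom
    obtain ⟨q, hq, hqle⟩ := Ideal.exists_minimalPrimes_le (I := ⊥) (J := span {x + y}) bot_le
    have hxq := hxy q (hfin.mem_toFinset.mpr hq)
    have hqp := hq.isPrime
    have hbot : q ≤ ⊥ := by
      refine Submodule.le_of_le_smul_of_le_jacobson_bot (I := span {x + y})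
        (IsNoetherian.noetherian q) ?_ ?_
      · exact (le_maximalIdeal hdom.ne_top).trans (maximalIdeal_le_jacobson _)
      · rw [bot_sup_eq]
        intro a ha
        obtain ⟨b, rfl⟩ := mem_span_singleton.mp (hqle ha)
        exact Submodule.smul_mem_smul (mem_span_singleton_self _)
          ((hqp.mem_or_mem ha).resolve_left hxq)
    rw [le_bot_iff.mp hbot] at hqp
    exact IsDomain.of_bot_isPrime R

theorem isRegular_of_isMaximal_ofList {R : Type*} [CommRing R] [IsLocalRing R] [IsNoetherianRing R]
    {rs : List R} (h : (ofList rs).IsMaximal) (hdim : ringKrullDim R = rs.length) :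
    IsRegular R rs := by
  refine IsRegular.of_isWeaklyRegular_of_mem_maximalIdeal R (fun r hr =>
    IsLocalRing.eq_maximalIdeal h ▸ Ideal.subset_span hr) ?_
  induction hn : rs.length generalizing R with
  | zero =>
    obtain rfl := List.length_eq_zero_iff.mp hn
    simp
  | succ d ih =>
    obtain ⟨x, rs, rfl⟩ := List.exists_cons_of_length_eq_add_one hn
    have hdom := isDomain_of_isMaximal_ofList h hdim
    have hx : x ≠ 0 := by
      rintro rfl
      have hmax : (ofList rs).IsMaximal := by simpa using h
      have := ringKrullDim_le_length_of_isMaximal_ofList hmax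
      rw [hdim, Nat.cast_le] at this
      simp at this
    obtain ⟨hloc, hmax, hdim'⟩ := quotient_span_singleton_of_isMaximal_ofList h hdim
    have hreg := ih hmax hdim' (by simpa using hn)
    rw [← Ideal.Quotient.algebraMap_eq, isWeaklyRegular_map_algebraMap_iff] at hreg
    rw [isWeaklyRegular_cons_iff]
    refine ⟨IsSMulRegular.of_ne_zero hx, ?_⟩
    refine (LinearEquiv.isWeaklyRegular_congr (Submodule.quotEquivOfEq _ _ ?_) rs).mp hreg
    simp [← Submodule.ideal_span_singleton_smul]

section

variable {A B : Type*} [CommRing A] [IsLocalRing A] [IsNoetherianRing A] [CommRing B]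
  [IsLocalRing B]

theorem le_of_le_sup_maximalIdeal_sq {J : Ideal A} (h : maximalIdeal A ≤ J ⊔ maximalIdeal A ^ 2) :
    maximalIdeal A ≤ J :=
  Submodule.le_of_le_smul_of_le_jacobson_bot (IsNoetherian.noetherian _)
    (maximalIdeal_le_jacobson _) (by rwa [smul_eq_mul, ← sq])

theorem isUnit_det_of_sub_mem_sq {φ : A →+* B} (hφ : Function.Surjective φ) {n p : ℕ}
    {t hs : Fin p → A} (ht : ∀ i, t i ∈ maximalIdeal A) (hker : RingHom.ker φ = span (Set.range hs))
    (hdim : ringKrullDim A = n) {s : Finset B} (hs_max : (span (s : Set B)).IsMaximal)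
    (hcard : s.card + p = n) (b : Matrix (Fin p) (Fin p) A)
    (hb : ∀ i, hs i - ∑ j, b i j * t j ∈ maximalIdeal A ^ 2) : IsUnit b.det := by
  classical
  by_contra hdet
  have hdet0 : (b.map (residue A)).det = 0 := by
    rw [← RingHom.mapMatrix_apply, ← RingHom.map_det, residue_eq_zero_iff]
    exact hdet
  obtain ⟨v, hv0, hv⟩ := Matrix.exists_vecMul_eq_zero_iff.mpr hdet0
  obtain ⟨i₀, hi₀⟩ := Function.ne_iff.mp hv0
  choose u hu using fun i => residue_surjective (v i)
  have hrel : ∑ i, u i * hs i ∈ maximalIdeal A ^ 2 := by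
    have hsplit : ∑ i, u i * hs i =
        ∑ i, u i * (hs i - ∑ j, b i j * t j) + ∑ j, (∑ i, u i * b i j) * t j := by
      simp only [mul_sub, Finset.sum_sub_distrib, Finset.mul_sum, Finset.sum_mul]
      rw [Finset.sum_comm (f := fun j i => u i * b i j * t j)]
      simp [mul_assoc]
    rw [hsplit]
    refine add_mem (sum_mem fun i _ => Ideal.mul_mem_left _ _ (hb i)) (sum_mem fun j _ => ?_)
    rw [sq]
    refine Ideal.mul_mem_mul ?_ (ht j)
    rw [← residue_eq_zero_iff, map_sum]
    simpa [Matrix.vecMul, dotProduct, hu] using congrFun hv j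
  have hunit : IsUnit (u i₀) := by
    by_contra h
    exact hi₀ ((hu i₀).symm.trans ((residue_eq_zero_iff _).mpr h))
  let T : Finset A := s.image (Function.surjInv hφ) ∪ (Finset.univ.erase i₀).image hs
  have hsT : (s.image (Function.surjInv hφ) : Set A) ⊆ T := by
    simp only [T, Finset.coe_union]; exact Set.subset_union_left
  have hhT : ∀ i, i ≠ i₀ → hs i ∈ span (T : Set A) := fun i hi =>
    Ideal.subset_span (Finset.mem_coe.mpr (Finset.mem_union_right _
      (Finset.mem_image_of_mem _ (by simp [hi]))))
  have hmap : map φ (span (s.image (Function.surjInv hφ) : Set A)) = maximalIdeal B := by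
    rw [← IsLocalRing.eq_maximalIdeal hs_max, Ideal.map_span, Finset.coe_image, ← Set.image_comp]
    congr 1
    ext x
    simp [Function.surjInv_eq hφ]
  have hmaxA : comap φ (maximalIdeal B) = maximalIdeal A :=
    IsLocalRing.eq_maximalIdeal (Ideal.comap_isMaximal_of_surjective φ hφ)
  have hker_le : RingHom.ker φ ≤ maximalIdeal A :=
    le_maximalIdeal (RingHom.ker_ne_top φ)
  have hkerT : RingHom.ker φ ≤ span (T : Set A) ⊔ maximalIdeal A ^ 2 := by
    rw [hker, Ideal.span_le]
    rintro _ ⟨i, rfl⟩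
    by_cases hi : i = i₀
    · subst hi
      rw [SetLike.mem_coe, ← Ideal.unit_mul_mem_iff_mem _ hunit]
      have := sub_mem (Ideal.mem_sup_right hrel : _ ∈ span (T : Set A) ⊔ maximalIdeal A ^ 2)
        (Ideal.mem_sup_left (sum_mem fun j (hj : j ∈ Finset.univ.erase i) =>
          Ideal.mul_mem_left _ (u j) (hhT j (Finset.ne_of_mem_erase hj))))
      rwa [← Finset.add_sum_erase _ _ (Finset.mem_univ i), add_sub_cancel_right] at this
    · exact Ideal.mem_sup_left (hhT i hi)
  have hle : maximalIdeal A ≤ span (T : Set A) := by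
    refine le_of_le_sup_maximalIdeal_sq ?_
    have hsup : maximalIdeal A =
        span (s.image (Function.surjInv hφ) : Set A) ⊔ RingHom.ker φ := by
      rw [← hmaxA, ← hmap, Ideal.comap_map_of_surjective' φ hφ]
    exact hsup.trans_le (sup_le ((Ideal.span_mono hsT).trans le_sup_left) hkerT)
  have hge : span (T : Set A) ≤ maximalIdeal A := by
    rw [Ideal.span_le]
    intro x hx
    rcases Finset.mem_union.mp (Finset.mem_coe.mp hx) with hx | hx
    · rw [SetLike.mem_coe, ← hmaxA, ← hmap]
      exact Ideal.le_comap_map (Ideal.subset_span hx)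
    · obtain ⟨i, -, rfl⟩ := Finset.mem_image.mp hx
      exact hker_le (hker ▸ Ideal.subset_span ⟨i, rfl⟩)
  have hn : n ≤ T.card := by
    have := ringKrullDim_le_spanFinrank_maximalIdeal A
    rw [hdim, Nat.cast_le, le_antisymm hle hge] at this
    refine this.trans
      ((Submodule.spanFinrank_span_le_ncard_of_finite (Finset.finite_toSet _)).trans ?_)
    rw [Set.ncard_coe_finset]
  have hT : T.card ≤ s.card + (p - 1) := by
    refine (Finset.card_union_le _ _).trans (add_le_add Finset.card_image_le
      (Finset.card_image_le.trans ?_))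
    simp
  have := i₀.pos
  omega

theorem span_range_tailFam_eq_maximalIdeal {φ : A →+* B} (hφ : Function.Surjective φ) {n p : ℕ}
    (hpn : p ≤ n) {gs : Fin n → A} {hs : Fin p → A} (hg : span (Set.range gs) = maximalIdeal A)
    (hker : ∀ i, φ (hs i) = 0) (b : Matrix (Fin p) (Fin p) A) (hdet : IsUnit b.det)
    (hb : ∀ i, hs i - ∑ j, b i j * gs (Fin.castLE hpn j) ∈ maximalIdeal A ^ 2) :
    span (Set.range fun j => φ (tailFam gs p j)) = maximalIdeal B := by
  have hmapA : map φ (maximalIdeal A) = maximalIdeal B := by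
    rw [← IsLocalRing.eq_maximalIdeal
      (Ideal.comap_isMaximal_of_surjective φ hφ (K := maximalIdeal B)),
      Ideal.map_comap_of_surjective φ hφ]
  refine le_antisymm ?_ ?_
  · rw [Ideal.span_le]
    rintro _ ⟨j, rfl⟩
    rw [SetLike.mem_coe, ← hmapA, ← hg]
    exact Ideal.mem_map_of_mem φ (Ideal.subset_span ⟨_, rfl⟩)
  rw [← hmapA, Ideal.map_le_iff_le_comap]
  set J := comap φ (span (Set.range fun j => φ (tailFam gs p j))) with hJ
  refine le_of_le_sup_maximalIdeal_sq ?_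
  have hrow : ∀ i, ∑ j, b i j * gs (Fin.castLE hpn j) ∈ J ⊔ maximalIdeal A ^ 2 := fun i => by
    have hhi : hs i ∈ J := by rw [hJ, Ideal.mem_comap, hker]; exact zero_mem _
    simpa using sub_mem (Ideal.mem_sup_left hhi) (Ideal.mem_sup_right (hb i))
  conv_lhs => rw [← hg]
  rw [Ideal.span_le]
  rintro _ ⟨j, rfl⟩
  by_cases hj : (j : ℕ) < p
  · rw [SetLike.mem_coe, ← Ideal.unit_mul_mem_iff_mem _ hdet]
    have hadj : b.det * gs j =
        ∑ i, b.adjugate ⟨j, hj⟩ i * ∑ l, b i l * gs (Fin.castLE hpn l) := by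
      have := congrFun (congrArg (Matrix.mulVec · fun l => gs (Fin.castLE hpn l))
        b.adjugate_mul) ⟨j, hj⟩
      simp only [← Matrix.mulVec_mulVec, Matrix.smul_mulVec, Matrix.one_mulVec] at this
      exact this.symm
    rw [hadj]
    exact sum_mem fun i _ => Ideal.mul_mem_left _ _ (hrow i)
  · refine Ideal.mem_sup_left (Ideal.subset_span ⟨⟨j - p, by omega⟩, ?_⟩)
    simp only [tailFam]
    congr 2
    ext
    simp; omega

end

theorem Ideal.ofList_ofFn {R : Type*} [CommRing R] {n : ℕ} (f : Fin n → R) :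
    ofList (List.ofFn f) = span (Set.range f) := by
  rw [Ideal.ofList]
  congr 1
  ext x
  simp [List.mem_ofFn]

theorem ringKrullDim_eq_length_of_isRegular {A : Type*} [CommRing A] [IsLocalRing A]
    [IsNoetherianRing A] {rs : List A} (hreg : IsRegular A rs)
    (hmax : ofList rs = maximalIdeal A) : ringKrullDim A = rs.length := by
  rw [← ringKrullDim_add_length_eq_ringKrullDim_of_isRegular rs hreg]
  have : (ofList rs).IsMaximal := hmax ▸ maximalIdeal.isMaximal A
  have : IsField (A ⧸ ofList rs) := (Ideal.Quotient.maximal_ideal_iff_isField_quotient _).mp this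
  rw [ringKrullDim_eq_zero_of_isField this, zero_add]

theorem isRegular_and_span_tailFam_eq_maximalIdeal {A B : Type*} [CommRing A] [IsLocalRing A]
    [IsNoetherianRing A] [CommRing B] {φ : A →+* B} (hφ : Function.Surjective φ) {n p : ℕ}
    (hpn : p ≤ n) {gs : Fin n → A} {hs : Fin p → A} (hgreg : IsRegular A (List.ofFn gs))
    (hg : span (Set.range gs) = maximalIdeal A) (hhreg : IsRegular A (List.ofFn hs))
    (hker : RingHom.ker φ = span (Set.range hs)) (hB : IsRegularLocal B)
    (b : Matrix (Fin p) (Fin p) A)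
    (hb : ∀ i, hs i - ∑ j, b i j * gs (Fin.castLE hpn j) ∈ maximalIdeal A ^ 2) :
    IsRegular B (List.ofFn fun j => φ (tailFam gs p j)) ∧
      (span (Set.range fun j => φ (tailFam gs p j))).IsMaximal := by
  obtain ⟨hnoeth, hloc, s, hsmax, hscard⟩ := hB
  have hdimA : ringKrullDim A = n := by
    simpa using ringKrullDim_eq_length_of_isRegular hgreg (by rw [ofList_ofFn, hg])
  have hdimB : ringKrullDim B + p = n := by
    have := ringKrullDim_add_length_eq_ringKrullDim_of_isRegular _ hhreg
    rwa [ofList_ofFn, ← hker, ringKrullDim_eq_of_ringEquiv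
      (RingHom.quotientKerEquivOfSurjective hφ), List.length_ofFn, hdimA] at this
  have hcard : s.card + p = n := by
    rw [← hscard] at hdimB
    exact_mod_cast hdimB
  have hdet := isUnit_det_of_sub_mem_sq hφ
    (fun i => hg ▸ Ideal.subset_span ⟨Fin.castLE hpn i, rfl⟩) hker hdimA hsmax hcard b hb
  have hspan := span_range_tailFam_eq_maximalIdeal hφ hpn hg
    (fun i => (RingHom.mem_ker (f := φ)).mp (hker ▸ Ideal.subset_span ⟨i, rfl⟩)) b hdet hb
  have hmax : (span (Set.range fun j => φ (tailFam gs p j))).IsMaximal :=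
    hspan ▸ maximalIdeal.isMaximal B
  refine ⟨isRegular_of_isMaximal_ofList (by rwa [ofList_ofFn]) ?_, hmax⟩
  rw [← hscard, List.length_ofFn, ← hcard, Nat.add_sub_cancel]

theorem exists_notMem_forall_mul_mem_of_mem_associatedPrimes {R : Type*} [CommRing R]
    [IsNoetherianRing R] {g P : Ideal R} [IsReduced (R ⧸ g)]
    (hP : P ∈ associatedPrimes R (R ⧸ g)) :
    P ∈ g.minimalPrimes ∧ ∃ a ∉ P, ∀ x ∈ P, x * a ∈ g := by
  obtain ⟨hprime, a, ha⟩ := Submodule.isAssociatedPrime_iff.mp hP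
  obtain ⟨a, rfl⟩ := Ideal.Quotient.mk_surjective a
  have hmem : ∀ x, x ∈ P ↔ x * a ∈ g := fun x => by
    rw [ha, Submodule.mem_colon_singleton, Submodule.mem_bot, ← Ideal.Quotient.eq_zero_iff_mem,
      map_mul]
    rfl
  have hgP : g ≤ P := fun x hx => (hmem x).mpr (g.mul_mem_right a hx)
  have hag : a ∉ g := fun h => hprime.ne_top
    ((Ideal.eq_top_iff_one _).mpr ((hmem 1).mpr (by rwa [one_mul])))
  have hrad : g.IsRadical := (Ideal.isRadical_iff_quotient_reduced g).mpr ‹_›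
  rw [← hrad.radical, ← Ideal.sInf_minimalPrimes, Ideal.mem_sInf] at hag
  push Not at hag
  obtain ⟨q, hq, haq⟩ := hag
  have hPq : P ≤ q := fun x hx =>
    (hq.isPrime.mem_or_mem (hq.1.2 ((hmem x).mp hx))).resolve_right haq
  obtain rfl : P = q := le_antisymm hPq (hq.2 ⟨hprime, hgP⟩ hPq)
  exact ⟨hq, a, haq, fun x hx => (hmem x).mp hx⟩

theorem exists_surjective_localization_quotient {R : Type*} [CommRing R] {h P : Ideal R}
    [P.IsPrime] (hle : h ≤ P) [(P.map (Ideal.Quotient.mk h)).IsPrime] :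
    ∃ φ : Localization.AtPrime P →+* Localization.AtPrime (P.map (Ideal.Quotient.mk h)),
      Function.Surjective φ ∧ RingHom.ker φ = h.map (algebraMap R (Localization.AtPrime P)) ∧
      ∀ x, φ (algebraMap R _ x) = algebraMap (R ⧸ h) _ (Ideal.Quotient.mk h x) := by
  have hM : Algebra.algebraMapSubmonoid (R ⧸ h) P.primeCompl =
      (P.map (Ideal.Quotient.mk h)).primeCompl := by
    ext y
    obtain ⟨y, rfl⟩ := Ideal.Quotient.mk_surjective y
    constructor
    · rintro ⟨x, hx, hxy⟩ hy
      refine hx ((Ideal.mem_quotient_iff_mem hle).mp ?_)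
      rwa [← hxy] at hy
    · intro hy
      exact ⟨y, fun hyP => hy (Ideal.mem_map_of_mem _ hyP), rfl⟩
  have hloc : IsLocalization (P.map (Ideal.Quotient.mk h)).primeCompl
      (Localization.AtPrime P ⧸ h.map (algebraMap R (Localization.AtPrime P))) :=
    hM ▸ inferInstance
  let e := IsLocalization.algEquiv (P.map (Ideal.Quotient.mk h)).primeCompl
    (Localization.AtPrime P ⧸ h.map (algebraMap R (Localization.AtPrime P)))
    (Localization.AtPrime (P.map (Ideal.Quotient.mk h)))
  refine ⟨e.toRingEquiv.toRingHom.comp (Ideal.Quotient.mk _),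
    e.surjective.comp Ideal.Quotient.mk_surjective, ?_, fun x => ?_⟩
  · ext x
    simp [RingHom.mem_ker, Ideal.Quotient.eq_zero_iff_mem]
  · exact e.commutes (Ideal.Quotient.mk h x)

/-- Proposition `free1`, part 3): for every associated prime `P` of `O/g`, the images of
`g_{p+1}, …, gₙ` in `(O/h)_P̄` form a regular sequence and generate `(g/h)_P̄`. -/
theorem statement13 {k : Type*} [Field k] [CharZero k] {m : ℕ}
    (h g : Ideal (MvPolynomial (Fin m) k)) (hle : h ≤ g)
    [IsReduced (MvPolynomial (Fin m) k ⧸ g)]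
    [ConnectedSpace (PrimeSpectrum (MvPolynomial (Fin m) k ⧸ g))]
    {p n : ℕ} (hpn : p ≤ n)
    (hs : Fin p → MvPolynomial (Fin m) k) (gs : Fin n → MvPolynomial (Fin m) k)
    (hhseq : RingTheory.Sequence.IsRegular (MvPolynomial (Fin m) k) (List.ofFn hs))
    (hhgen : h = Ideal.span (Set.range hs))
    (hgseq : RingTheory.Sequence.IsRegular (MvPolynomial (Fin m) k) (List.ofFn gs))
    (hggen : g = Ideal.span (Set.range gs))
    (hreg : ∀ q ∈ g.minimalPrimes, regularAtImage h q)
    (b : Fin p → Fin p → MvPolynomial (Fin m) k)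
    (hcong : ∀ i : Fin p, hs i - ∑ j, b i j * gs (Fin.castLE hpn j) ∈ g ^ 2) :
    ∀ P ∈ associatedPrimes (MvPolynomial (Fin m) k) (MvPolynomial (Fin m) k ⧸ g),
      generatesAsCI h g gs p P := by
  intro P hPass hPmap
  obtain ⟨hPmin, a, haP, ha⟩ := exists_notMem_forall_mul_mem_of_mem_associatedPrimes hPass
  have hPprime := hPmin.isPrime
  have hgP : g ≤ P := hPmin.1.2
  have hB := hreg P hPmin hPmap
  obtain ⟨φ, hφ, hker, hφalg⟩ := exists_surjective_localization_quotient (hle.trans hgP)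
  set A := Localization.AtPrime P
  have hgA : g.map (algebraMap _ A) = maximalIdeal A := by
    rw [← Localization.AtPrime.map_eq_maximalIdeal]
    refine le_antisymm (Ideal.map_mono hgP) (Ideal.map_le_iff_le_comap.mpr fun x hx => ?_)
    rw [Ideal.mem_comap, ← Ideal.mul_unit_mem_iff_mem _
      (IsLocalization.map_units A (⟨a, haP⟩ : P.primeCompl)),
      ← map_mul]
    exact Ideal.mem_map_of_mem _ (ha x hx)
  have hlist {l : ℕ} (f : Fin l → MvPolynomial (Fin m) k) (hf : ∀ i, f i ∈ P)
      (hreg : IsRegular (MvPolynomial (Fin m) k) (List.ofFn f)) :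
      IsRegular A (List.ofFn (algebraMap _ A ∘ f)) := by
    rw [← List.map_ofFn]
    refine hreg.toIsWeaklyRegular.isRegular_of_isLocalization_of_mem A P fun r hr => ?_
    obtain ⟨i, rfl⟩ := List.mem_ofFn.mp hr
    exact hf i
  have hspanA {l : ℕ} (f : Fin l → MvPolynomial (Fin m) k) :
      span (Set.range (algebraMap _ A ∘ f)) = (span (Set.range f)).map (algebraMap _ A) := by
    rw [Ideal.map_span, Set.range_comp]
  obtain ⟨hregB, hmaxB⟩ := isRegular_and_span_tailFam_eq_maximalIdeal hφ hpn
    (hlist gs (fun i => hgP (hggen ▸ Ideal.subset_span ⟨i, rfl⟩)) hgseq)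
    (by rw [hspanA, ← hggen, hgA])
    (hlist hs (fun i => hgP (hle (hhgen ▸ Ideal.subset_span ⟨i, rfl⟩))) hhseq)
    (by rw [hspanA, ← hhgen, hker]) hB (fun i j => algebraMap _ A (b i j))
    (fun i => by
      rw [← hgA, ← Ideal.map_pow]
      simpa using Ideal.mem_map_of_mem (algebraMap _ A) (hcong i))
  have htail : (fun j => φ (tailFam (algebraMap _ A ∘ gs) p j)) = fun j =>
      algebraMap _ (locAt (P.map (Ideal.Quotient.mk h)) hPmap)
        (Ideal.Quotient.mk h (tailFam gs p j)) := funext fun j => hφalg _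
  rw [htail] at hregB hmaxB
  refine ⟨hregB, ?_⟩
  have hgB : (g.map (Ideal.Quotient.mk h)).map
      (algebraMap _ (locAt (P.map (Ideal.Quotient.mk h)) hPmap)) = maximalIdeal _ := by
    have hcomp : (algebraMap _ (locAt (P.map (Ideal.Quotient.mk h)) hPmap)).comp
        (Ideal.Quotient.mk h) = φ.comp (algebraMap _ A) := RingHom.ext fun x => (hφalg x).symm
    rw [Ideal.map_map, hcomp, ← Ideal.map_map, hgA, ← IsLocalRing.eq_maximalIdeal
      (Ideal.comap_isMaximal_of_surjective φ hφ (K := maximalIdeal _)),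
      Ideal.map_comap_of_surjective φ hφ]
  rw [hgB]
  exact IsLocalRing.eq_maximalIdeal hmaxB
end

section
/- Let 𝒪 be a polynomial ring over a field k of characteristic zero, 𝔥 ⊆ 𝔤 complete intersection ideals of grades p and n, with 𝒪/𝔤 reduced and Spec(𝒪/𝔤) connected, and the localization of 𝒪/𝔥 at (the image of) every minimal prime of 𝔤 a regular local ring. Suppose 𝔤 is generated by an 𝒪-regular sequence g₁,…,g_n and 𝔥 by h₁,…,h_p with h_i ≡ Σ_{j=1}^p b_{ij} g_j mod 𝔤². Then ∫_𝔥 𝔤 = (g₁,…,g_p) + (g_{p+1},…,g_n)². -/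
open Ideal

open IsLocalRing in
/-- A generating family of the maximal ideal with at most `dim S` members is linearly
independent in the cotangent space. -/
theorem linearIndependent_toCotangent_of_card_le_ringKrullDim {S : Type*} [CommRing S]
    [IsLocalRing S] [IsNoetherianRing S] {ι : Type*} [Fintype ι] (x : ι → maximalIdeal S)
    (hx : Ideal.span (Set.range fun i => (x i : S)) = maximalIdeal S)
    (hcard : (Fintype.card ι : WithBot ℕ∞) ≤ ringKrullDim S) :
    LinearIndependent (ResidueField S) fun i => (maximalIdeal S).toCotangent (x i) := by
  apply linearIndependent_of_top_le_span_of_card_le_finrank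
  · have h1 : Submodule.span S (Set.range x) = ⊤ := by
      apply Submodule.map_injective_of_injective (maximalIdeal S).injective_subtype
      rw [Submodule.map_span, Submodule.map_top, Submodule.range_subtype, ← Set.range_comp]
      exact hx
    have h2 := CotangentSpace.span_image_eq_top_iff.mpr h1
    rw [← Set.range_comp] at h2
    exact h2.ge
  · rw [← spanFinrank_maximalIdeal_eq_finrank_cotangentSpace]
    exact_mod_cast hcard.trans (ringKrullDim_le_spanFinrank_maximalIdeal S)

open IsLocalRing in
/-- If the quotient of a local ring `S` by `r` elements is a local ring whose maximal ideal is
generated by at most `dim S - r` elements, then these `r` elements are linearly independent in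
the cotangent space of `S`. -/
theorem linearIndependent_toCotangent_of_quotient {S A : Type*} [CommRing S] [CommRing A]
    [IsLocalRing S] [IsNoetherianRing S] {ι : Type*} [Fintype ι]
    (x : ι → maximalIdeal S) (π : S →+* A) (hπ : Function.Surjective π)
    (hker : RingHom.ker π = Ideal.span (Set.range fun i => (x i : S)))
    (s : Finset A) (hs : (Ideal.span (s : Set A)).IsMaximal)
    (hcard : (s.card : WithBot ℕ∞) + Fintype.card ι ≤ ringKrullDim S) :
    LinearIndependent (ResidueField S) fun i => (maximalIdeal S).toCotangent (x i) := by
  have hπ' := hπ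
  choose l hl using hπ'
  have hmax : (Ideal.comap π (Ideal.span (s : Set A))).IsMaximal :=
    Ideal.comap_isMaximal_of_surjective π hπ
  have hmem : ∀ a : s, l a ∈ maximalIdeal S := fun a => by
    rw [← eq_maximalIdeal hmax, Ideal.mem_comap, hl]
    exact Ideal.subset_span a.2
  let y : ι ⊕ s → maximalIdeal S := Sum.elim x fun a => ⟨l a, hmem a⟩
  have hrange : (Set.range fun i => (y i : S)) =
      (Set.range fun i => (x i : S)) ∪ Set.range fun a : s => l a := by
    have : (fun i => (y i : S)) = Sum.elim (fun i => (x i : S)) fun a : s => l a := by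
      ext i; cases i <;> rfl
    rw [this, Set.Sum.elim_range]
  have himage : π '' (Set.range fun a : s => l a) = (s : Set A) := by
    ext a
    constructor
    · rintro ⟨_, ⟨c, rfl⟩, rfl⟩
      rw [hl]; exact c.2
    · exact fun ha => ⟨l a, ⟨⟨a, ha⟩, rfl⟩, hl a⟩
  have hy : Ideal.span (Set.range fun i => (y i : S)) = maximalIdeal S := by
    refine Eq.trans ?_ (eq_maximalIdeal hmax)
    rw [hrange, Ideal.span_union, ← himage, ← Ideal.map_span,
      Ideal.comap_map_of_surjective π hπ, ← RingHom.ker_eq_comap_bot, hker, sup_comm]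
  have := linearIndependent_toCotangent_of_card_le_ringKrullDim y hy (by
    rw [Fintype.card_sum, Fintype.card_coe, add_comm]
    exact_mod_cast hcard)
  exact this.comp Sum.inl Sum.inl_injective

/-- Every derivation of a polynomial ring is a combination of the partial derivatives. -/
theorem MvPolynomial.derivation_apply_eq_sum_pderiv {k σ N : Type*} [CommRing k] [Fintype σ]
    [AddCommGroup N] [Module k N] [Module (MvPolynomial σ k) N]
    [IsScalarTower k (MvPolynomial σ k) N] (D : Derivation k (MvPolynomial σ k) N)
    (f : MvPolynomial σ k) :
    D f = ∑ i, MvPolynomial.pderiv i f • D (MvPolynomial.X i) := by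
  classical
  let E : Derivation k (MvPolynomial σ k) N :=
    ∑ i, ((LinearMap.toSpanSingleton (MvPolynomial σ k) N (D (MvPolynomial.X i))).compDer
      (MvPolynomial.pderiv i))
  have hE : ∀ f, E f = ∑ i, MvPolynomial.pderiv i f • D (MvPolynomial.X i) := fun f => by
    have : ⇑E = ∑ i, ⇑((LinearMap.toSpanSingleton (MvPolynomial σ k) N
        (D (MvPolynomial.X i))).compDer (MvPolynomial.pderiv i)) :=
      map_sum Derivation.coeFnAddMonoidHom _ _
    simp [this]
  rw [← hE]
  congr 1
  apply MvPolynomial.derivation_ext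
  intro j
  simp [hE, MvPolynomial.pderiv_X, Pi.single_apply, ite_smul]

open IsLocalRing in
/-- The Jacobian criterion: let `S` be a local algebra over a polynomial ring over `k`, with
residue field formally smooth over `k`.  Polynomials whose images lie in the maximal ideal of `S`
and are linearly independent in the cotangent space have linearly independent gradients over
the residue field. -/
theorem linearIndependent_pderiv_of_toCotangent {k : Type*} [Field k] {m : ℕ}
    {S : Type*} [CommRing S] [IsLocalRing S] [Algebra k S] [Algebra (MvPolynomial (Fin m) k) S]
    [IsScalarTower k (MvPolynomial (Fin m) k) S]
    [Algebra.FormallySmooth k (ResidueField S)] {ι : Type*} [Finite ι]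
    (x : ι → MvPolynomial (Fin m) k) (y : ι → maximalIdeal S)
    (hxy : ∀ i, algebraMap _ S (x i) = y i)
    (hy : LinearIndependent (ResidueField S) fun i => (maximalIdeal S).toCotangent (y i)) :
    LinearIndependent (ResidueField S) fun i (t : Fin m) =>
      algebraMap (MvPolynomial (Fin m) k) (ResidueField S) (MvPolynomial.pderiv t (x i)) := by
  have := Fintype.ofFinite ι
  let π : S ⧸ maximalIdeal S ^ 2 →ₐ[k] (ResidueField S) :=
    Ideal.Quotient.liftₐ (maximalIdeal S ^ 2) (IsScalarTower.toAlgHom k S (ResidueField S)) fun a ha =>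
      (residue_eq_zero_iff a).mpr (Ideal.pow_le_self two_ne_zero ha)
  have hπ : ∀ s : S, π (Ideal.Quotient.mk (maximalIdeal S ^ 2) s) = residue S s := fun s => rfl
  have hπsurj : Function.Surjective π := fun a => by
    obtain ⟨s, rfl⟩ := residue_surjective a
    exact ⟨_, hπ s⟩
  have hmem : ∀ s : S, Ideal.Quotient.mk (maximalIdeal S ^ 2) s ∈ RingHom.ker π ↔ s ∈ maximalIdeal S := fun s => by
    rw [RingHom.mem_ker, hπ, residue_eq_zero_iff]
  have hmul : ∀ s ∈ maximalIdeal S, ∀ u ∈ RingHom.ker π, Ideal.Quotient.mk (maximalIdeal S ^ 2) s * u = 0 := by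
    intro s hs u hu
    obtain ⟨u, rfl⟩ := Ideal.Quotient.mk_surjective u
    rw [← map_mul, Ideal.Quotient.eq_zero_iff_mem, pow_two]
    exact Ideal.mul_mem_mul hs ((hmem u).mp hu)
  have hsq : RingHom.ker π ^ 2 = ⊥ := by
    rw [eq_bot_iff, pow_two (RingHom.ker π), Ideal.mul_le]
    intro u hu w hw
    obtain ⟨u, rfl⟩ := Ideal.Quotient.mk_surjective u
    exact hmul u ((hmem u).mp hu) w hw
  let σ : (ResidueField S) →ₐ[k] S ⧸ maximalIdeal S ^ 2 := Algebra.FormallySmooth.liftOfSurjective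
    (AlgHom.id k (ResidueField S)) π hπsurj ⟨2, hsq⟩
  have hσ : ∀ a, π (σ a) = a := fun a =>
    Algebra.FormallySmooth.liftOfSurjective_apply (AlgHom.id k (ResidueField S)) π hπsurj
      ⟨2, hsq⟩ a
  let f : MvPolynomial (Fin m) k →ₐ[k] S ⧸ maximalIdeal S ^ 2 :=
    σ.comp (IsScalarTower.toAlgHom k _ (ResidueField S))
  let D := derivationToSquareZeroOfLift (RingHom.ker π) hsq f (by
    ext i
    refine Ideal.Quotient.eq.mpr ?_
    rw [RingHom.mem_ker, map_sub, sub_eq_zero]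
    exact hσ _)
  have hD : ∀ i, ((D (x i) : RingHom.ker π) : S ⧸ maximalIdeal S ^ 2) =
      -Ideal.Quotient.mk (maximalIdeal S ^ 2) (y i : S) := by
    intro i
    rw [derivationToSquareZeroOfLift_apply]
    have h0 : algebraMap _ (ResidueField S) (x i) = 0 := by
      rw [IsScalarTower.algebraMap_apply _ S, hxy]
      exact (residue_eq_zero_iff _).mpr (y i).2
    have h1 : f (x i) = 0 := by
      change σ (algebraMap _ (ResidueField S) (x i)) = 0
      rw [h0, map_zero]
    rw [h1, zero_sub, ← hxy]
    rfl
  rw [Fintype.linearIndependent_iff] at hy ⊢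
  intro a ha
  apply hy
  choose c hc using fun i => residue_surjective (R := S) (a i)
  have hsum : ∀ t : Fin m,
      ∑ i, c i * algebraMap _ S (MvPolynomial.pderiv t (x i)) ∈ maximalIdeal S := by
    intro t
    rw [← residue_eq_zero_iff, map_sum]
    have := congrFun ha t
    simp only [Finset.sum_apply, Pi.smul_apply, smul_eq_mul, Pi.zero_apply] at this
    simp only [map_mul, hc]
    exact this
  have hc' : ∀ i, a i • (maximalIdeal S).toCotangent (y i) = (maximalIdeal S).toCotangent (c i • y i) := fun i => by
    rw [map_smul, ← hc i]
    rfl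
  simp only [hc', ← map_sum]
  rw [Ideal.toCotangent_eq_zero, ← Ideal.Quotient.eq_zero_iff_mem]
  have hDsum : ∀ i, Ideal.Quotient.mk (maximalIdeal S ^ 2) (y i : S) = - ∑ t,
      Ideal.Quotient.mk (maximalIdeal S ^ 2) (algebraMap _ S (MvPolynomial.pderiv t (x i))) *
        ((D (MvPolynomial.X t) : RingHom.ker π) : S ⧸ maximalIdeal S ^ 2) := fun i => by
    rw [← neg_eq_iff_eq_neg, ← hD, MvPolynomial.derivation_apply_eq_sum_pderiv D (x i),
      AddSubmonoidClass.coe_finsetSum]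
    refine Finset.sum_congr rfl fun t _ => ?_
    rw [Submodule.coe_smul_of_tower, Algebra.smul_def]
    rfl
  rw [AddSubmonoidClass.coe_finsetSum, map_sum]
  simp only [SetLike.val_smul, smul_eq_mul, map_mul, hDsum, mul_neg, Finset.sum_neg_distrib,
    Finset.mul_sum, ← mul_assoc]
  rw [Finset.sum_comm, neg_eq_zero]
  refine Finset.sum_eq_zero fun t _ => ?_
  rw [← Finset.sum_mul]
  have := hmul _ (hsum t) _ (D (MvPolynomial.X t)).2
  simpa only [map_sum, map_mul] using this

/-- A linearly independent family of `p` vectors in `κ^σ` has an invertible `p × p` minor. -/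
theorem exists_det_ne_zero_of_linearIndependent {κ ι σ : Type*} [Field κ] [Fintype ι]
    [DecidableEq ι] [Finite σ] (v : ι → σ → κ) (hv : LinearIndependent κ v) :
    ∃ e : ι → σ, (Matrix.of fun i l => v i (e l)).det ≠ 0 := by
  have := Fintype.ofFinite σ
  let A : Matrix ι σ κ := Matrix.of v
  have hrank : A.rank = Fintype.card ι := LinearIndependent.rank_matrix hv
  rw [Matrix.rank_eq_finrank_span_cols] at hrank
  obtain ⟨f, hf, -, hli⟩ := Submodule.exists_fun_fin_finrank_span_eq κ (Set.range A.col)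
  choose e he using hf
  let ε : ι ≃ Fin (Module.finrank κ (Submodule.span κ (Set.range A.col))) :=
    Fintype.equivFinOfCardEq hrank.symm
  refine ⟨fun l => e (ε l), ?_⟩
  have hcols : LinearIndependent κ (Matrix.of fun i l => v i (e (ε l))).col := by
    have heq : (Matrix.of fun i l => v i (e (ε l))).col = f ∘ ε := by
      ext l i
      exact congrFun (he (ε l)) i
    rw [heq]
    exact hli.comp ε ε.injective
  rw [Matrix.linearIndependent_cols_iff_isUnit, Matrix.isUnit_iff_isUnit_det] at hcols
  exact hcols.ne_zero

section LocalStructure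

variable {k : Type*} [Field k] {m : ℕ} (q : Ideal (MvPolynomial (Fin m) k)) [q.IsPrime]

theorem formallySmooth_residueField [CharZero k] : Algebra.FormallySmooth k q.ResidueField :=
  have : Algebra.EssFiniteType k q.ResidueField :=
    Algebra.EssFiniteType.comp k (MvPolynomial (Fin m) k) _
  Algebra.FormallySmooth.of_perfectField

theorem maximalIdeal_eq_map_of_mem_minimalPrimes {R : Type*} [CommRing R] {g q : Ideal R}
    [q.IsPrime] (hg : g.IsRadical) (hq : q ∈ g.minimalPrimes) :
    g.map (algebraMap R (Localization.AtPrime q)) =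
      IsLocalRing.maximalIdeal (Localization.AtPrime q) := by
  rw [← Localization.AtPrime.map_eq_maximalIdeal,
    ← IsLocalization.AtPrime.radical_map_of_mem_minimalPrimes _ q g hq,
    ← IsLocalization.map_radical q.primeCompl, hg.radical]

theorem linearIndependent_pderiv_of_isRegular [CharZero k] {g : Ideal (MvPolynomial (Fin m) k)}
    (hg : g.IsRadical) (hq : q ∈ g.minimalPrimes) {n : ℕ} (gs : Fin n → MvPolynomial (Fin m) k)
    (hgseq : RingTheory.Sequence.IsRegular (MvPolynomial (Fin m) k) (List.ofFn gs))
    (hggen : g = Ideal.span (Set.range gs)) :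
    LinearIndependent q.ResidueField fun j (t : Fin m) =>
      algebraMap (MvPolynomial (Fin m) k) q.ResidueField (MvPolynomial.pderiv t (gs j)) := by
  have := formallySmooth_residueField q
  have hmem : ∀ j, gs j ∈ q := fun j =>
    hq.1.2 (hggen ▸ Ideal.subset_span (Set.mem_range_self j))
  let y : Fin n → IsLocalRing.maximalIdeal (Localization.AtPrime q) := fun j =>
    ⟨algebraMap _ _ (gs j), (IsLocalization.AtPrime.to_map_mem_maximal_iff _ q _).mpr (hmem j)⟩
  apply linearIndependent_pderiv_of_toCotangent gs y fun j => rfl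
  apply linearIndependent_toCotangent_of_card_le_ringKrullDim
  · refine Eq.trans ?_ (maximalIdeal_eq_map_of_mem_minimalPrimes hg hq)
    rw [hggen, Ideal.map_span, ← Set.range_comp]
    rfl
  · have hreg := hgseq.toIsWeaklyRegular.isRegular_of_isLocalization_of_mem
      (Localization.AtPrime q) q (by
        intro r hr
        obtain ⟨j, rfl⟩ := (List.mem_ofFn' _ _).mp hr
        exact hmem j)
    have hdim := ringKrullDim_add_length_eq_ringKrullDim_of_isRegular _ hreg
    have hnt : Nontrivial (Localization.AtPrime q ⧸
        Ideal.ofList ((List.ofFn gs).map (algebraMap _ (Localization.AtPrime q)))) := by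
      apply Ideal.Quotient.nontrivial_iff.mpr
      intro h
      apply hreg.2
      rw [h]
      simp
    rw [← hdim, Fintype.card_fin, List.length_map, List.length_ofFn]
    exact le_add_of_nonneg_left ringKrullDim_nonneg_of_nontrivial

theorem linearIndependent_pderiv_of_regularAtImage [CharZero k]
    {h : Ideal (MvPolynomial (Fin m) k)} (hle : h ≤ q) {p : ℕ}
    (hs : Fin p → MvPolynomial (Fin m) k)
    (hhseq : RingTheory.Sequence.IsRegular (MvPolynomial (Fin m) k) (List.ofFn hs))
    (hhgen : h = Ideal.span (Set.range hs)) (hreg : regularAtImage h q) :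
    LinearIndependent q.ResidueField fun j (t : Fin m) =>
      algebraMap (MvPolynomial (Fin m) k) q.ResidueField (MvPolynomial.pderiv t (hs j)) := by
  have := formallySmooth_residueField q
  have hmem : ∀ j, hs j ∈ q := fun j =>
    hle (hhgen ▸ Ideal.subset_span (Set.mem_range_self j))
  have hP : (q.map (Ideal.Quotient.mk h)).IsPrime :=
    Ideal.map_isPrime_of_surjective Ideal.Quotient.mk_surjective (by simpa using hle)
  obtain ⟨-, -, s, hsmax, hscard⟩ := hreg hP
  set S := Localization.AtPrime q with hS
  let y : Fin p → IsLocalRing.maximalIdeal S := fun j =>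
    ⟨algebraMap _ _ (hs j), (IsLocalization.AtPrime.to_map_mem_maximal_iff _ q _).mpr (hmem j)⟩
  have hmon : Algebra.algebraMapSubmonoid (MvPolynomial (Fin m) k ⧸ h) q.primeCompl =
      (q.map (Ideal.Quotient.mk h)).primeCompl := by
    have hcomap : (q.map (Ideal.Quotient.mk h)).comap (Ideal.Quotient.mk h) = q := by
      rw [Ideal.comap_map_of_surjective _ Ideal.Quotient.mk_surjective,
        ← RingHom.ker_eq_comap_bot, Ideal.mk_ker, sup_eq_left.mpr hle]
    ext a
    constructor
    · rintro ⟨r, hr, rfl⟩ hr'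
      apply hr
      rw [← hcomap]
      exact hr'
    · intro ha
      obtain ⟨r, rfl⟩ := Ideal.Quotient.mk_surjective a
      exact ⟨r, fun hr => ha (Ideal.mem_map_of_mem _ hr), rfl⟩
  have hloc : IsLocalization (q.map (Ideal.Quotient.mk h)).primeCompl
      (S ⧸ h.map (algebraMap _ S)) := by
    rw [← hmon]
    infer_instance
  let e : (S ⧸ h.map (algebraMap _ S)) ≃+* locAt (q.map (Ideal.Quotient.mk h)) hP :=
    (IsLocalization.algEquiv (q.map (Ideal.Quotient.mk h)).primeCompl
      (S ⧸ h.map (algebraMap _ S)) (locAt (q.map (Ideal.Quotient.mk h)) hP)).toRingEquiv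
  have hspan : h.map (algebraMap _ S) = Ideal.span (Set.range fun j => (y j : S)) := by
    rw [hhgen, Ideal.map_span, ← Set.range_comp]
    rfl
  apply linearIndependent_pderiv_of_toCotangent hs y fun j => rfl
  refine linearIndependent_toCotangent_of_quotient y
    ((e : _ →+* _).comp (Ideal.Quotient.mk (h.map (algebraMap _ S))))
    (e.surjective.comp Ideal.Quotient.mk_surjective) ?_ s hsmax ?_
  · rw [← hspan]
    ext a
    simp [RingHom.mem_ker, Ideal.Quotient.eq_zero_iff_mem]
  · have hregS := hhseq.toIsWeaklyRegular.isRegular_of_isLocalization_of_mem S q (by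
        intro r hr
        obtain ⟨j, rfl⟩ := (List.mem_ofFn' _ _).mp hr
        exact hmem j)
    have hdim := ringKrullDim_add_length_eq_ringKrullDim_of_isRegular _ hregS
    have hofList : Ideal.ofList ((List.ofFn hs).map (algebraMap _ S)) =
        h.map (algebraMap _ S) := by
      rw [← Ideal.map_ofList, hhgen, Ideal.ofList]
      congr 2
      ext; simp [List.mem_ofFn']
    rw [hofList, List.length_map, List.length_ofFn, ringKrullDim_eq_of_ringEquiv e,
      ← hscard] at hdim
    rw [Fintype.card_fin, hdim]

end LocalStructure

theorem Derivation.apply_mem_of_mem_sq {k R : Type*} [CommRing k] [CommRing R] [Algebra k R]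
    (ξ : Derivation k R R) {g : Ideal R} {x : R} (hx : x ∈ g ^ 2) : ξ x ∈ g := by
  rw [pow_two] at hx
  refine Submodule.mul_induction_on hx (fun a ha b hb => ?_) fun a b ha hb => ?_
  · rw [Derivation.leibniz]
    exact g.add_mem (g.mul_mem_right _ ha) (g.mul_mem_right _ hb)
  · rw [map_add]
    exact g.add_mem ha hb

theorem preservesIdeal_of_apply_eq_zero {k R ι : Type*} [CommRing k] [CommRing R] [Algebra k R]
    {h : Ideal R} {hs : ι → R} (hhgen : h = Ideal.span (Set.range hs)) (ξ : Derivation k R R)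
    (hξ : ∀ i, ξ (hs i) = 0) : PreservesIdeal h ξ := by
  intro x hx
  subst hhgen
  induction hx using Submodule.span_induction with
  | mem x hx =>
    obtain ⟨i, rfl⟩ := hx
    rw [hξ]
    exact zero_mem _
  | zero => simp
  | add x y _ _ hx hy =>
    rw [map_add]
    exact add_mem hx hy
  | smul a x hx hxi =>
    rw [smul_eq_mul, Derivation.leibniz]
    exact add_mem (Ideal.mul_mem_left _ _ hxi) (Ideal.mul_mem_right _ _ hx)

/-- Cramer's rule for derivations: if `A = (D_l(h_i))`, then the derivation
`det A • E - ∑ l, (adj A · E(h))_l • D_l` annihilates every `h_i`. -/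
theorem exists_derivation_eq_cramer {k R ι : Type*} [CommRing k] [CommRing R] [Algebra k R]
    [Fintype ι] [DecidableEq ι] (hs : ι → R) (D : ι → Derivation k R R) (E : Derivation k R R) :
    ∃ ξ : Derivation k R R, (∀ i, ξ (hs i) = 0) ∧ ∀ f, ξ f =
      (Matrix.of fun i l => D l (hs i)).det * E f - ∑ l, (∑ i,
        (Matrix.of fun i l => D l (hs i)).adjugate l i * E (hs i)) * D l f := by
  set A : Matrix ι ι R := Matrix.of fun i l => D l (hs i) with hA
  let w : ι → R := A.adjugate.mulVec fun i => E (hs i)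
  let ξ : Derivation k R R := A.det • E - ∑ l, w l • D l
  have hsum : ⇑(∑ l, w l • D l) = ∑ l, ⇑(w l • D l) :=
    map_sum Derivation.coeFnAddMonoidHom _ _
  have hξ : ∀ f, ξ f = A.det * E f - ∑ l, w l * D l f := fun f => by
    simp [ξ, hsum]
  refine ⟨ξ, fun i => ?_, hξ⟩
  have hcramer : A.mulVec w = A.det • fun i => E (hs i) := by
    rw [Matrix.mulVec_mulVec, Matrix.mul_adjugate, Matrix.smul_mulVec, Matrix.one_mulVec]
  have := congrFun hcramer i
  rw [hξ, sub_eq_zero]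
  simp only [Matrix.mulVec, dotProduct, Pi.smul_apply, smul_eq_mul] at this
  rw [← this]
  exact Finset.sum_congr rfl fun l _ => mul_comm _ _

section Coefficients

variable {k : Type*} [Field k] {m p n : ℕ} (hpn : p ≤ n)
  {hs : Fin p → MvPolynomial (Fin m) k} {gs : Fin n → MvPolynomial (Fin m) k}
  {b : Fin p → Fin p → MvPolynomial (Fin m) k}
  {κ : Type*} [Field κ] {φ : MvPolynomial (Fin m) k →+* κ}

/-- Gradients of `h_i ≡ ∑ j, b_{ij} g_j mod g²` at a point of the zero locus of `g`. -/
theorem map_pderiv_eq_sum {g : Ideal (MvPolynomial (Fin m) k)}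
    (hcong : ∀ i : Fin p, hs i - ∑ j, b i j * gs (Fin.castLE hpn j) ∈ g ^ 2)
    (hφ : g ≤ RingHom.ker φ) (hgs : ∀ j, gs j ∈ g) (i : Fin p) (t : Fin m) :
    φ (MvPolynomial.pderiv t (hs i)) =
      ∑ j, φ (b i j) * φ (MvPolynomial.pderiv t (gs (Fin.castLE hpn j))) := by
  have h0 := hφ (Derivation.apply_mem_of_mem_sq (MvPolynomial.pderiv t) (hcong i))
  rw [RingHom.mem_ker, map_sub, map_sub, sub_eq_zero] at h0
  rw [h0, map_sum, map_sum]
  refine Finset.sum_congr rfl fun j _ => ?_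
  have hg0 : φ (gs (Fin.castLE hpn j)) = 0 := hφ (hgs _)
  simp [Derivation.leibniz, hg0]

theorem map_det_ne_zero
    (hli : LinearIndependent κ fun i (t : Fin m) => φ (MvPolynomial.pderiv t (hs i)))
    (hgrad : ∀ i t, φ (MvPolynomial.pderiv t (hs i)) =
      ∑ j, φ (b i j) * φ (MvPolynomial.pderiv t (gs (Fin.castLE hpn j)))) :
    φ (Matrix.of b).det ≠ 0 := by
  intro hdet
  rw [RingHom.map_det] at hdet
  obtain ⟨v, hv, hvb⟩ := Matrix.exists_vecMul_eq_zero_iff.mpr hdet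
  refine hv (funext (Fintype.linearIndependent_iff.mp hli v ?_))
  ext t
  simp only [Finset.sum_apply, Pi.smul_apply, smul_eq_mul, Pi.zero_apply, hgrad, Finset.mul_sum,
    ← mul_assoc]
  rw [Finset.sum_comm]
  refine Finset.sum_eq_zero fun j _ => ?_
  rw [← Finset.sum_mul]
  have : ∑ i, v i * φ (b i j) = 0 := by
    simpa [Matrix.vecMul, dotProduct] using congrFun hvb j
  rw [this, zero_mul]

/-- If every derivation killing all `h_i` maps `f = ∑ j, c_j g_j` into `ker φ`, then
`φ (c_j) = 0` for `j > p`. -/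
theorem map_coeff_eq_zero
    (hlih : LinearIndependent κ fun i (t : Fin m) => φ (MvPolynomial.pderiv t (hs i)))
    (hlig : LinearIndependent κ fun j (t : Fin m) => φ (MvPolynomial.pderiv t (gs j)))
    (hgrad : ∀ i t, φ (MvPolynomial.pderiv t (hs i)) =
      ∑ j, φ (b i j) * φ (MvPolynomial.pderiv t (gs (Fin.castLE hpn j))))
    (hgs : ∀ j, φ (gs j) = 0) (c : Fin n → MvPolynomial (Fin m) k)
    (hf : ∀ ξ : Derivation k (MvPolynomial (Fin m) k) (MvPolynomial (Fin m) k),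
      (∀ i, ξ (hs i) = 0) → φ (ξ (∑ j, c j * gs j)) = 0)
    (j : Fin n) (hj : p ≤ j) : φ (c j) = 0 := by
  obtain ⟨e, he⟩ := exists_det_ne_zero_of_linearIndependent _ hlih
  set f := ∑ j, c j * gs j with hfdef
  let A : Matrix (Fin p) (Fin p) (MvPolynomial (Fin m) k) :=
    Matrix.of fun i l => MvPolynomial.pderiv (e l) (hs i)
  have hdet : φ A.det ≠ 0 := by
    rw [RingHom.map_det]
    exact he
  have hdf : ∀ t, φ (MvPolynomial.pderiv t f) =
      ∑ j, φ (c j) * φ (MvPolynomial.pderiv t (gs j)) := fun t => by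
    simp [hfdef, Derivation.leibniz, hgs]
  let a : Fin p → κ := fun i =>
    ∑ l, φ (A.adjugate l i) * φ (MvPolynomial.pderiv (e l) f)
  have ha : ∀ t, φ A.det * φ (MvPolynomial.pderiv t f) =
      ∑ i, a i * φ (MvPolynomial.pderiv t (hs i)) := fun t => by
    obtain ⟨ξ, hξ, hξf⟩ := exists_derivation_eq_cramer hs
      (fun l => MvPolynomial.pderiv (R := k) (e l)) (MvPolynomial.pderiv t)
    have h0 := hf ξ hξ
    rw [hξf, map_sub, map_mul, sub_eq_zero] at h0
    refine h0.trans ?_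
    simp only [map_sum, map_mul, a, Finset.sum_mul]
    rw [Finset.sum_comm]
    exact Finset.sum_congr rfl fun i _ => Finset.sum_congr rfl fun l _ => mul_right_comm _ _ _
  let d : Fin n → κ := fun j => φ A.det * φ (c j) -
    ∑ j' : Fin p, if Fin.castLE hpn j' = j then ∑ i, a i * φ (b i j') else 0
  have hd : ∀ j, d j = 0 := by
    refine Fintype.linearIndependent_iff.mp hlig d ?_
    ext t
    have hdt := ha t
    simp only [hdf, hgrad, Finset.mul_sum, ← mul_assoc] at hdt
    simp only [Finset.sum_apply, Pi.smul_apply, smul_eq_mul, Pi.zero_apply, d, sub_mul,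
      Finset.sum_sub_distrib, sub_eq_zero]
    rw [hdt, Finset.sum_comm]
    simp only [Finset.sum_mul, ite_mul, zero_mul]
    rw [Finset.sum_comm (s := (Finset.univ : Finset (Fin n)))]
    simp
  have hdj := hd j
  have hne : ∀ j' : Fin p, Fin.castLE hpn j' ≠ j := fun j' h => by
    have := congrArg Fin.val h
    simp only [Fin.val_castLE] at this
    omega
  simp only [d, hne, if_false, Finset.sum_const_zero, sub_zero] at hdj
  exact (mul_eq_zero.mp hdj).resolve_left hdet

end Coefficients

theorem span_range_eq_sup_tailFam {R : Type*} [CommRing R] {p n : ℕ} (hpn : p ≤ n)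
    (gs : Fin n → R) :
    Ideal.span (Set.range gs) = Ideal.span (Set.range fun j : Fin p => gs (Fin.castLE hpn j)) ⊔
      Ideal.span (Set.range (tailFam gs p)) := by
  rw [← Ideal.span_union]
  congr 1
  ext x
  constructor
  · rintro ⟨j, rfl⟩
    by_cases hj : (j : ℕ) < p
    · exact Or.inl ⟨⟨j, hj⟩, rfl⟩
    · refine Or.inr ⟨⟨j - p, by omega⟩, congrArg gs (Fin.ext ?_)⟩
      simp only
      omega
  · rintro (⟨j, rfl⟩ | ⟨j, rfl⟩)
    · exact ⟨_, rfl⟩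
    · exact ⟨_, rfl⟩

/-- Cramer's rule modulo `g²`: `det b * g_j ∈ h + g²`. -/
theorem det_mul_mem_sup_sq {R : Type*} [CommRing R] {p : ℕ} {h g : Ideal R} {hs gs : Fin p → R}
    {b : Fin p → Fin p → R} (hhs : ∀ i, hs i ∈ h)
    (hcong : ∀ i, hs i - ∑ j, b i j * gs j ∈ g ^ 2) (j : Fin p) :
    (Matrix.of b).det * gs j ∈ h ⊔ g ^ 2 := by
  have hcramer : (Matrix.of b).det * gs j =
      ∑ i, (Matrix.of b).adjugate j i * ∑ l, b i l * gs l := by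
    have : (Matrix.of b).adjugate.mulVec ((Matrix.of b).mulVec gs) = (Matrix.of b).det • gs := by
      rw [Matrix.mulVec_mulVec, Matrix.adjugate_mul, Matrix.smul_mulVec, Matrix.one_mulVec]
    exact (congrFun this j).symm
  rw [hcramer]
  refine sum_mem fun i _ => Ideal.mul_mem_left _ _ ?_
  rw [← sub_sub_cancel (hs i) (∑ l, b i l * gs l)]
  exact sub_mem (Ideal.mem_sup_left (hhs i)) (Ideal.mem_sup_right (hcong i))

/-- Proposition `free1`, part 4): `∫_h g = (g₁, …, g_p) + (g_{p+1}, …, gₙ)²`. -/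
theorem statement14 {k : Type*} [Field k] [CharZero k] {m : ℕ}
    (h g : Ideal (MvPolynomial (Fin m) k)) (hle : h ≤ g)
    [IsReduced (MvPolynomial (Fin m) k ⧸ g)]
    [ConnectedSpace (PrimeSpectrum (MvPolynomial (Fin m) k ⧸ g))]
    {p n : ℕ} (hpn : p ≤ n)
    (hs : Fin p → MvPolynomial (Fin m) k) (gs : Fin n → MvPolynomial (Fin m) k)
    (hhseq : RingTheory.Sequence.IsRegular (MvPolynomial (Fin m) k) (List.ofFn hs))
    (hhgen : h = Ideal.span (Set.range hs))
    (hgseq : RingTheory.Sequence.IsRegular (MvPolynomial (Fin m) k) (List.ofFn gs))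
    (hggen : g = Ideal.span (Set.range gs))
    (hreg : ∀ q ∈ g.minimalPrimes, regularAtImage h q)
    (b : Fin p → Fin p → MvPolynomial (Fin m) k)
    (hcong : ∀ i : Fin p, hs i - ∑ j, b i j * gs (Fin.castLE hpn j) ∈ g ^ 2) :
    primitiveIdeal k h g =
      Ideal.span (Set.range fun j : Fin p => gs (Fin.castLE hpn j)) ⊔
        (Ideal.span (Set.range (tailFam gs p))) ^ 2 := by
  have hrad : g.IsRadical := (Ideal.isRadical_iff_quotient_reduced g).mpr inferInstance
  have hmemg : ∀ j, gs j ∈ g := fun j => hggen ▸ Ideal.subset_span (Set.mem_range_self j)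
  have hmemh : ∀ i, hs i ∈ h := fun i => hhgen ▸ Ideal.subset_span (Set.mem_range_self i)
  have hmem_of : ∀ x, (∀ q ∈ g.minimalPrimes, x ∈ q) → x ∈ g := fun x hx => by
    rw [← hrad.radical, ← Ideal.sInf_minimalPrimes, Ideal.mem_sInf]
    exact fun {q} hq => hx q hq
  have hlocal : ∀ q ∈ g.minimalPrimes, ∃ _ : q.IsPrime,
      (LinearIndependent q.ResidueField fun i (t : Fin m) =>
        algebraMap (MvPolynomial (Fin m) k) q.ResidueField (MvPolynomial.pderiv t (hs i))) ∧
      (LinearIndependent q.ResidueField fun j (t : Fin m) =>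
        algebraMap (MvPolynomial (Fin m) k) q.ResidueField (MvPolynomial.pderiv t (gs j))) ∧
      ∀ i t, algebraMap _ q.ResidueField (MvPolynomial.pderiv t (hs i)) =
        ∑ j, algebraMap _ q.ResidueField (b i j) *
          algebraMap _ q.ResidueField (MvPolynomial.pderiv t (gs (Fin.castLE hpn j))) := by
    intro q hq
    have hqp : q.IsPrime := hq.1.1
    exact ⟨hqp,
      linearIndependent_pderiv_of_regularAtImage q (hle.trans hq.1.2) hs hhseq hhgen (hreg q hq),
      linearIndependent_pderiv_of_isRegular q hrad hq gs hgseq hggen,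
      map_pderiv_eq_sum hpn hcong (by rw [Ideal.ker_algebraMap_residueField]; exact hq.1.2) hmemg⟩
  have hdet : ∀ x, (Matrix.of b).det * x ∈ g → x ∈ g := by
    refine fun x hx => hmem_of x fun q hq => ?_
    obtain ⟨hqp, hlih, -, hgrad⟩ := hlocal q hq
    refine (hqp.mem_or_mem (hq.1.2 hx)).resolve_left fun hd => ?_
    exact map_det_ne_zero hpn hlih hgrad (Ideal.algebraMap_residueField_eq_zero.mpr hd)
  have hsplit := hggen.trans (span_range_eq_sup_tailFam hpn gs)
  apply le_antisymm
  · intro f hf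
    obtain ⟨hfg, hfξ⟩ := hf
    rw [hggen] at hfg
    obtain ⟨c, rfl⟩ := (Ideal.mem_span_range_iff_exists_fun).mp hfg
    have hc : ∀ j : Fin n, p ≤ j → c j ∈ g := by
      refine fun j hj => hmem_of _ fun q hq => ?_
      obtain ⟨hqp, hlih, hlig, hgrad⟩ := hlocal q hq
      refine Ideal.algebraMap_residueField_eq_zero.mp
        (map_coeff_eq_zero hpn hlih hlig hgrad
          (fun j => Ideal.algebraMap_residueField_eq_zero.mpr (hq.1.2 (hmemg j))) c
          (fun ξ hξ => Ideal.algebraMap_residueField_eq_zero.mpr (hq.1.2 (hfξ ξ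
            (preservesIdeal_of_apply_eq_zero hhgen ξ hξ)))) j hj)
    refine sum_mem fun j _ => ?_
    by_cases hj : (j : ℕ) < p
    · exact Ideal.mem_sup_left (Ideal.mul_mem_left _ _ (Ideal.subset_span ⟨⟨j, hj⟩, rfl⟩))
    · have hcj := hc j (not_lt.mp hj)
      rw [hsplit] at hcj
      obtain ⟨u, hu, w, hw, huw⟩ := Submodule.mem_sup.mp hcj
      rw [← huw, add_mul]
      refine add_mem (Ideal.mem_sup_left (Ideal.mul_mem_right _ _ hu)) (Ideal.mem_sup_right ?_)
      rw [pow_two]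
      refine Ideal.mul_mem_mul hw (Ideal.subset_span ⟨⟨j - p, by omega⟩, congrArg gs (Fin.ext ?_)⟩)
      simp only
      omega
  · have hsq : g ^ 2 ≤ primitiveIdeal k h g := fun x hx =>
      ⟨Ideal.pow_le_self two_ne_zero hx, fun ξ _ => ξ.apply_mem_of_mem_sq hx⟩
    refine sup_le (Ideal.span_le.mpr ?_) ((Ideal.pow_right_mono ?_ 2).trans hsq)
    · rintro _ ⟨j, rfl⟩
      refine ⟨hmemg _, fun ξ hξ => hdet _ ?_⟩
      have hξmem : ξ ((Matrix.of b).det * gs (Fin.castLE hpn j)) ∈ g := by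
        obtain ⟨u, hu, w, hw, huw⟩ := Submodule.mem_sup.mp (det_mul_mem_sup_sq hmemh hcong j)
        rw [← huw, map_add]
        exact add_mem (hle (hξ u hu)) (ξ.apply_mem_of_mem_sq hw)
      rw [Derivation.leibniz] at hξmem
      exact (Submodule.add_mem_iff_left _ (Ideal.mul_mem_right _ _ (hmemg _))).mp hξmem
    · rw [hsplit]
      exact le_sup_right
end

section
/- Let 𝒪 = ℂ[x, y₁,…,y_n] and let 𝔤 = (y₁,…,y_n) define the line Σ (the x-axis) in ℂ^{n+1}. Let 𝔥 ⊆ 𝔤 be a complete intersection ideal of grade p whose zero set X = V(𝔥) has an isolated singularity at the origin, i.e. the localization of 𝒪/𝔥 at every prime containing 𝔥 other than (x, y₁,…,y_n) is a regular local ring, and (𝒪/𝔥) localized at (x,y₁,…,y_n) is not regular or p < n+1. Then there exists an 𝒪-regular sequence y′₁,…,y′_n generating 𝔤 such that: the images of y′₁,…,y′_p in the conormal module M = 𝔤/(𝔤²+𝔥) generate its torsion T(M); the images of y′_{p+1},…,y′_n generate N = M/T(M), which is free of rank n − p over 𝒪/𝔤; and ∫_𝔥 𝔤 = (y′₁,…,y′_p)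 + (y′_{p+1},…,y′_n)². -/
open Ideal

namespace LineGeometry

open MvPolynomial

variable {n : ℕ}

/-- The ideal of the `x`-axis in affine `(n + 1)`-space. -/
noncomputable abbrev lineIdeal (n : ℕ) : Ideal (MvPolynomial (Fin (n + 1)) ℂ) :=
  Ideal.span (Set.range fun i : Fin n => X i.succ)

lemma X_succ_mem (j : Fin n) : (X j.succ : MvPolynomial (Fin (n + 1)) ℂ) ∈ lineIdeal n :=
  Ideal.subset_span ⟨j, rfl⟩

/-- Restriction of a polynomial to the `x`-axis. -/
noncomputable def lineProj (n : ℕ) : MvPolynomial (Fin (n + 1)) ℂ →ₐ[ℂ] Polynomial ℂ :=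
  aeval (Fin.cons Polynomial.X 0)

/-- A polynomial in `x`, viewed as a polynomial in `x, y₁, …, yₙ`. -/
noncomputable def lineIncl (n : ℕ) : Polynomial ℂ →ₐ[ℂ] MvPolynomial (Fin (n + 1)) ℂ :=
  Polynomial.aeval (X 0)

@[simp] lemma lineProj_X_zero : lineProj n (X 0) = Polynomial.X := by
  simp [lineProj]

@[simp] lemma lineProj_X_succ (i : Fin n) : lineProj n (X i.succ) = 0 := by
  simp [lineProj]

@[simp] lemma lineProj_lineIncl (c : Polynomial ℂ) : lineProj n (lineIncl n c) = c := by
  have : (lineProj n).comp (lineIncl n) = AlgHom.id ℂ _ := by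
    ext; simp [lineIncl]
  exact DFunLike.congr_fun this c

lemma sub_mem_of_algHom {σ B : Type*} [CommRing B] [Algebra ℂ B]
    (I : Ideal B) (φ ψ : MvPolynomial σ ℂ →ₐ[ℂ] B)
    (hX : ∀ i, φ (X i) - ψ (X i) ∈ I) (f : MvPolynomial σ ℂ) : φ f - ψ f ∈ I := by
  have : (Ideal.Quotient.mkₐ ℂ I).comp φ = (Ideal.Quotient.mkₐ ℂ I).comp ψ := by
    ext i
    simpa using Ideal.Quotient.eq.mpr (hX i)
  exact Ideal.Quotient.eq.mp (by simpa using DFunLike.congr_fun this f)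

lemma sub_lineIncl_lineProj_mem (f : MvPolynomial (Fin (n + 1)) ℂ) :
    f - lineIncl n (lineProj n f) ∈ lineIdeal n := by
  refine sub_mem_of_algHom _ (AlgHom.id ℂ _) ((lineIncl n).comp (lineProj n)) (fun i => ?_) f
  refine Fin.cases ?_ (fun j => ?_) i
  · simp [lineIncl]
  · simpa using X_succ_mem j

lemma mem_lineIdeal_iff {f : MvPolynomial (Fin (n + 1)) ℂ} :
    f ∈ lineIdeal n ↔ lineProj n f = 0 := by
  constructor
  · intro hf
    have : lineIdeal n ≤ RingHom.ker (lineProj n) := by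
      rw [Ideal.span_le]
      rintro _ ⟨i, rfl⟩
      simp
    exact this hf
  · intro hf
    simpa [hf] using sub_lineIncl_lineProj_mem f

instance lineIdeal_isPrime : (lineIdeal n).IsPrime := by
  have : lineIdeal n = RingHom.ker (lineProj n) := by
    ext f
    exact mem_lineIdeal_iff
  rw [this]
  exact RingHom.ker_isPrime _

lemma lineIdeal_ne_span_range_X :
    lineIdeal n ≠ Ideal.span (Set.range (X : Fin (n + 1) → MvPolynomial (Fin (n + 1)) ℂ)) := by
  intro he
  have : (X 0 : MvPolynomial (Fin (n + 1)) ℂ) ∈ lineIdeal n := by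
    rw [he]
    exact Ideal.subset_span ⟨0, rfl⟩
  simp [mem_lineIdeal_iff] at this

/-- The part of a polynomial that is linear in `y₁, …, yₙ`, as a vector over `ℂ[x]`. -/
noncomputable def linPart (n : ℕ) :
    MvPolynomial (Fin (n + 1)) ℂ →ₗ[ℂ] (Fin n → Polynomial ℂ) :=
  LinearMap.pi fun k => (lineProj n).toLinearMap ∘ₗ (pderiv k.succ).toLinearMap

lemma linPart_apply (f : MvPolynomial (Fin (n + 1)) ℂ) (k : Fin n) :
    linPart n f k = lineProj n (pderiv k.succ f) := rfl

lemma linPart_mul (a b : MvPolynomial (Fin (n + 1)) ℂ) :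
    linPart n (a * b) = lineProj n a • linPart n b + lineProj n b • linPart n a := by
  ext1 k
  simp [linPart_apply]

lemma linPart_mul_of_mem (a : MvPolynomial (Fin (n + 1)) ℂ) {b : MvPolynomial (Fin (n + 1)) ℂ}
    (hb : b ∈ lineIdeal n) : linPart n (a * b) = lineProj n a • linPart n b := by
  rw [linPart_mul, mem_lineIdeal_iff.mp hb, zero_smul, add_zero]

lemma linPart_X_succ (j : Fin n) : linPart n (X j.succ) = Pi.single j 1 := by
  ext1 k
  rw [linPart_apply, pderiv_X]
  by_cases hk : k = j
  · subst hk; simp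
  · simp [hk, Ne.symm hk]

/-- The element `∑ vⱼ(x) yⱼ` of the ideal of the `x`-axis. -/
noncomputable def linComb (n : ℕ) :
    (Fin n → Polynomial ℂ) →ₛₗ[(lineIncl n).toRingHom] MvPolynomial (Fin (n + 1)) ℂ where
  toFun v := ∑ j, lineIncl n (v j) * X j.succ
  map_add' v w := by simp [add_mul, Finset.sum_add_distrib]
  map_smul' c v := by simp [Finset.mul_sum, mul_assoc]

lemma linComb_apply (v : Fin n → Polynomial ℂ) :
    linComb n v = ∑ j, lineIncl n (v j) * X j.succ := rfl

lemma linComb_mem (v : Fin n → Polynomial ℂ) : linComb n v ∈ lineIdeal n := by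
  rw [linComb_apply]
  exact Ideal.sum_mem _ fun j _ => Ideal.mul_mem_left _ _ (X_succ_mem j)

lemma linPart_linComb (v : Fin n → Polynomial ℂ) : linPart n (linComb n v) = v := by
  rw [linComb_apply, map_sum]
  simp_rw [linPart_mul_of_mem _ (X_succ_mem _), lineProj_lineIncl, linPart_X_succ]
  exact (pi_eq_sum_univ' v).symm

lemma sub_linComb_mem {f : MvPolynomial (Fin (n + 1)) ℂ} (hf : f ∈ lineIdeal n) :
    f - linComb n (linPart n f) ∈ lineIdeal n ^ 2 := by
  induction hf using Submodule.span_induction with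
  | mem x hx =>
    obtain ⟨j, rfl⟩ := hx
    rw [linPart_X_succ, linComb_apply, Finset.sum_eq_single j]
    · simp
    · intro k _ hk
      simp [hk]
    · simp
  | zero => rw [map_zero, map_zero, sub_zero]; exact zero_mem _
  | add a b _ _ ha hb =>
    rw [map_add, map_add, add_sub_add_comm]
    exact add_mem ha hb
  | smul a f hf ih =>
    have hf' : f ∈ lineIdeal n := hf
    rw [smul_eq_mul, linPart_mul_of_mem _ hf', LinearMap.map_smulₛₗ]
    have : a * f - lineIncl n (lineProj n a) * linComb n (linPart n f) =
        (a - lineIncl n (lineProj n a)) * f +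
          lineIncl n (lineProj n a) * (f - linComb n (linPart n f)) := by ring
    refine (congrArg (· ∈ lineIdeal n ^ 2) this).mpr (add_mem ?_ (Ideal.mul_mem_left _ _ ih))
    rw [sq]
    exact Ideal.mul_mem_mul (sub_lineIncl_lineProj_mem a) hf'

lemma linPart_eq_zero_of_mem_sq {f : MvPolynomial (Fin (n + 1)) ℂ}
    (hf : f ∈ lineIdeal n ^ 2) : linPart n f = 0 := by
  rw [sq] at hf
  induction hf using Submodule.mul_induction_on' with
  | mem_mul_mem a ha b hb =>
    rw [linPart_mul_of_mem _ hb, mem_lineIdeal_iff.mp ha, zero_smul]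
  | add a _ b _ ha hb => rw [map_add, ha, hb, add_zero]

lemma mem_sq_of_linPart_eq_zero {f : MvPolynomial (Fin (n + 1)) ℂ}
    (hf : f ∈ lineIdeal n) (h0 : linPart n f = 0) : f ∈ lineIdeal n ^ 2 := by
  have := sub_linComb_mem hf
  rwa [h0, map_zero, sub_zero] at this

lemma linPart_mem_span {ι : Type*} {τ : ι → MvPolynomial (Fin (n + 1)) ℂ}
    (hτ : ∀ i, τ i ∈ lineIdeal n) {f : MvPolynomial (Fin (n + 1)) ℂ}
    (hf : f ∈ Ideal.span (Set.range τ)) :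
    linPart n f ∈ Submodule.span (Polynomial ℂ) (Set.range fun i => linPart n (τ i)) := by
  have hle : Ideal.span (Set.range τ) ≤ lineIdeal n := by
    rw [Ideal.span_le]
    rintro _ ⟨i, rfl⟩
    exact hτ i
  induction hf using Submodule.span_induction with
  | mem x hx =>
    obtain ⟨i, rfl⟩ := hx
    exact Submodule.subset_span ⟨i, rfl⟩
  | zero => simp
  | add a b _ _ ha hb => rw [map_add]; exact add_mem ha hb
  | smul a f hf ih =>
    rw [smul_eq_mul, linPart_mul_of_mem _ (hle hf)]
    exact Submodule.smul_mem _ _ ih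

lemma exists_fintype_generators_of_isRegularLocal {O : Type*} [CommRing O] {h P : Ideal O}
    [P.IsPrime] (hle : h ≤ P) (hreg : regularAtImage h P) :
    ∃ (ι : Type) (_ : Fintype ι) (σ : ι → O),
      (∃ hP : (P.map (Ideal.Quotient.mk h)).IsPrime,
        (Fintype.card ι : WithBot ℕ∞) = ringKrullDim (locAt (P.map (Ideal.Quotient.mk h)) hP)) ∧
      (∀ i, σ i ∈ P) ∧
      ∀ y ∈ P, ∃ t, t ∉ P ∧ t * y ∈ Ideal.span (Set.range σ) ⊔ h := by
  have hP : (P.map (Ideal.Quotient.mk h)).IsPrime :=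
    Ideal.map_isPrime_of_surjective Ideal.Quotient.mk_surjective (by simpa using hle)
  have hmk : ∀ x, Ideal.Quotient.mk h x ∈ P.map (Ideal.Quotient.mk h) ↔ x ∈ P := fun x => by
    rw [Ideal.mem_quotient_iff_mem_sup, sup_eq_left.mpr hle]
  let R := locAt (P.map (Ideal.Quotient.mk h)) hP
  obtain ⟨-, -, s, hmax, hcard⟩ : IsRegularLocal R := hreg hP
  replace hmax := IsLocalRing.eq_maximalIdeal hmax
  have hlift : ∀ a : s, ∃ σ : O, ∃ u : R, IsUnit u ∧
      a.1 * u = algebraMap (O ⧸ h) R (Ideal.Quotient.mk h σ) := fun a => by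
    obtain ⟨⟨r, u⟩, hru⟩ :=
      IsLocalization.surj (P.map (Ideal.Quotient.mk h)).primeCompl a.1
    obtain ⟨σ, rfl⟩ := Ideal.Quotient.mk_surjective r
    exact ⟨σ, _, IsLocalization.map_units R u, hru⟩
  choose σ u hu hσ using hlift
  have hspan : (Ideal.span (Set.range fun a => Ideal.Quotient.mk h (σ a))).map
      (algebraMap (O ⧸ h) R) = IsLocalRing.maximalIdeal R := by
    rw [← hmax, Ideal.map_span]
    apply le_antisymm
    · rw [Ideal.span_le]
      rintro _ ⟨_, ⟨a, rfl⟩, rfl⟩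
      simp only [← hσ]
      exact Ideal.mul_mem_right _ _ (Ideal.subset_span a.2)
    · rw [Ideal.span_le]
      intro a ha
      rw [SetLike.mem_coe, ← Ideal.mul_unit_mem_iff_mem _ (hu ⟨a, ha⟩), hσ ⟨a, ha⟩]
      exact Ideal.subset_span ⟨_, ⟨⟨a, ha⟩, rfl⟩, rfl⟩
  let e := s.equivFin
  refine ⟨Fin s.card, inferInstance, σ ∘ e.symm, ⟨hP, by simpa using hcard⟩, fun i => ?_, ?_⟩
  · rw [← hmk, ← IsLocalization.AtPrime.to_map_mem_maximal_iff R (P.map (Ideal.Quotient.mk h)),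
      ← hspan]
    exact Ideal.mem_map_of_mem _ (Ideal.subset_span ⟨_, rfl⟩)
  · intro y hy
    rw [← hmk, ← IsLocalization.AtPrime.to_map_mem_maximal_iff R (P.map (Ideal.Quotient.mk h)),
      ← hspan, IsLocalization.algebraMap_mem_map_algebraMap_iff
        (P.map (Ideal.Quotient.mk h)).primeCompl] at hy
    obtain ⟨t, ht, hty⟩ := hy
    obtain ⟨t, rfl⟩ := Ideal.Quotient.mk_surjective t
    refine ⟨t, fun h' => ht ((hmk t).mpr h'), ?_⟩
    rw [← Ideal.mem_quotient_iff_mem_sup, Ideal.map_span, e.symm.surjective.range_comp,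
      ← Set.range_comp, map_mul]
    exact hty

lemma ringKrullDim_locAt_add_length_le {O : Type*} [CommRing O] [IsNoetherianRing O]
    {h P : Ideal O} [P.IsPrime] (hle : h ≤ P) {rs : List O}
    (hreg : RingTheory.Sequence.IsWeaklyRegular O rs) (hgen : h = Ideal.ofList rs)
    (hP : (P.map (Ideal.Quotient.mk h)).IsPrime) :
    ringKrullDim (locAt (P.map (Ideal.Quotient.mk h)) hP) + rs.length ≤ P.height := by
  have hcomap : P = (P.map (Ideal.Quotient.mk h)).comap (Ideal.Quotient.mk h) := by
    ext x
    rw [Ideal.mem_comap, Ideal.mem_quotient_iff_mem_sup, sup_eq_left.mpr hle]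
  have hmem : ∀ r ∈ rs, r ∈ P := fun r hr =>
    hle (hgen ▸ Ideal.subset_span hr)
  have hregS := hreg.isRegular_of_isLocalization_of_mem (Localization.AtPrime P) P hmem
  have hdim := ringKrullDim_add_length_eq_ringKrullDim_of_isRegular _ hregS
  rw [IsLocalization.AtPrime.ringKrullDim_eq_height P (Localization.AtPrime P), List.length_map] at hdim
  rw [← hdim]
  gcongr
  let φ := Localization.localRingHom P (P.map (Ideal.Quotient.mk h)) (Ideal.Quotient.mk h) hcomap
  have hφ : Function.Surjective φ := by
    intro z
    obtain ⟨⟨r, u⟩, rfl⟩ :=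
      IsLocalization.mk'_surjective (P.map (Ideal.Quotient.mk h)).primeCompl z
    obtain ⟨r, rfl⟩ := Ideal.Quotient.mk_surjective r
    obtain ⟨u, hu⟩ := u
    obtain ⟨u, rfl⟩ := Ideal.Quotient.mk_surjective u
    exact ⟨IsLocalization.mk' (Localization.AtPrime P) r
        (⟨u, fun h' => hu (Ideal.mem_map_of_mem _ h')⟩ : P.primeCompl),
      Localization.localRingHom_mk' _ _ _ _ _ _⟩
  have hker : ∀ a ∈ Ideal.ofList (rs.map (algebraMap O (Localization.AtPrime P))), φ a = 0 := by
    intro a ha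
    have : Ideal.ofList (rs.map (algebraMap O (Localization.AtPrime P))) ≤ RingHom.ker φ := by
      rw [← Ideal.map_ofList, ← hgen, Ideal.map_le_iff_le_comap]
      intro x hx
      rw [Ideal.mem_comap, RingHom.mem_ker, Localization.localRingHom_to_map,
        Ideal.Quotient.eq_zero_iff_mem.mpr hx, map_zero]
    exact this ha
  exact ringKrullDim_le_of_surjective (Ideal.Quotient.lift _ φ hker)
    (Ideal.Quotient.lift_surjective_of_surjective _ hker hφ)

lemma height_lineIdeal_le : (lineIdeal n).height ≤ n := by
  refine ((lineIdeal n).height_le_spanRank_toENat (Ideal.IsPrime.ne_top inferInstance)).trans ?_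
  refine (Cardinal.toENat.monotone' (Submodule.spanRank_span_le_card _)).trans ?_
  refine (Cardinal.toENat.monotone' Cardinal.mk_range_le).trans ?_
  simp

lemma linearIndependent_linPart {h : Ideal (MvPolynomial (Fin (n + 1)) ℂ)}
    (hle : h ≤ lineIdeal n) {p : ℕ} {hs : Fin p → MvPolynomial (Fin (n + 1)) ℂ}
    (hhseq : RingTheory.Sequence.IsRegular (MvPolynomial (Fin (n + 1)) ℂ) (List.ofFn hs))
    (hhgen : h = Ideal.span (Set.range hs)) (hreg : regularAtImage h (lineIdeal n)) :
    LinearIndependent (Polynomial ℂ) fun i => linPart n (hs i) := by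
  obtain ⟨ι, _, σ, ⟨hP, hcard⟩, hσ, hgenσ⟩ :=
    exists_fintype_generators_of_isRegularLocal hle hreg
  have hhs : ∀ i, hs i ∈ lineIdeal n := fun i =>
    hle (hhgen ▸ Ideal.subset_span ⟨i, rfl⟩)
  have hdim := ringKrullDim_locAt_add_length_le hle hhseq.toIsWeaklyRegular
    (by rw [hhgen, Ideal.ofList]; congr 1; ext; simp) hP
  rw [← hcard, List.length_ofFn] at hdim
  have hcard_le : Fintype.card ι + p ≤ n := by
    have := hdim.trans (WithBot.coe_le_coe.mpr height_lineIdeal_le)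
    exact_mod_cast this
  let K := FractionRing (Polynomial ℂ)
  let τ : ι ⊕ Fin p → MvPolynomial (Fin (n + 1)) ℂ := Sum.elim σ hs
  have hτ : ∀ i, τ i ∈ lineIdeal n := by
    rintro (i | i)
    · exact hσ i
    · exact hhs i
  have hτspan : Ideal.span (Set.range τ) = Ideal.span (Set.range σ) ⊔ h := by
    rw [hhgen, Set.Sum.elim_range, Ideal.span_union]
  let A : (Fin n → Polynomial ℂ) →ₗ[Polynomial ℂ] (Fin n → K) :=
    (Algebra.linearMap (Polynomial ℂ) K).compLeft (Fin n)
  let v : ι ⊕ Fin p → Fin n → K := fun i => A (linPart n (τ i))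
  have hspan : ⊤ ≤ Submodule.span K (Set.range v) := by
    rw [← (Pi.basisFun K (Fin n)).span_eq, Submodule.span_le]
    rintro _ ⟨j, rfl⟩
    obtain ⟨t, ht, hty⟩ := hgenσ _ (X_succ_mem j)
    rw [← hτspan] at hty
    have h1 := linPart_mem_span hτ hty
    rw [linPart_mul_of_mem _ (X_succ_mem j), linPart_X_succ] at h1
    have h2 := Submodule.mem_map_of_mem (f := A) h1
    rw [Submodule.map_span, ← Set.range_comp] at h2
    have h3 := Submodule.span_subset_span (Polynomial ℂ) K _ h2
    have ht0 : algebraMap (Polynomial ℂ) K (lineProj n t) ≠ 0 := by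
      rw [mem_lineIdeal_iff] at ht
      simpa using ht
    have h4 := Submodule.smul_mem _ (algebraMap (Polynomial ℂ) K (lineProj n t))⁻¹ h3
    have hcoe : Pi.basisFun K (Fin n) j = (algebraMap (Polynomial ℂ) K (lineProj n t))⁻¹ •
        A (lineProj n t • Pi.single j 1) := by
      ext1 k
      by_cases hk : k = j
      · subst hk; simp [A, Algebra.smul_def, inv_mul_cancel₀ ht0]
      · simp [A, hk]
    rw [hcoe]
    exact h4
  have hge : n ≤ Fintype.card (ι ⊕ Fin p) := by
    have := finrank_range_le_card (R := K) v
    rwa [Set.finrank, top_le_iff.mp hspan, finrank_top, Module.finrank_fin_fun] at this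
  have hli : LinearIndependent K v := by
    refine linearIndependent_of_top_le_span_of_card_eq_finrank hspan ?_
    rw [Module.finrank_fin_fun]
    rw [Fintype.card_sum, Fintype.card_fin] at hge ⊢
    omega
  have hli' := hli.comp Sum.inr Sum.inr_injective
  rw [← LinearIndependent.iff_fractionRing (Polynomial ℂ) K] at hli'
  exact LinearIndependent.of_comp A hli'

lemma mem_span_X_image_iff_aeval_eq_zero {σ : Type*} (S : Set σ) [DecidablePred (· ∈ S)]
    (f : MvPolynomial σ ℂ) : f ∈ Ideal.span ((X : σ → MvPolynomial σ ℂ) '' S) ↔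
      aeval (fun k => if k ∈ S then 0 else (X k : MvPolynomial σ ℂ)) f = 0 := by
  set φ : MvPolynomial σ ℂ →ₐ[ℂ] MvPolynomial σ ℂ :=
    aeval (fun k => if k ∈ S then 0 else (X k : MvPolynomial σ ℂ)) with hφ
  constructor
  · intro hf
    have : Ideal.span ((X : σ → MvPolynomial σ ℂ) '' S) ≤ RingHom.ker φ := by
      rw [Ideal.span_le]
      rintro _ ⟨k, hk, rfl⟩
      simp [hφ, hk]
    exact this hf
  · intro hf
    have := sub_mem_of_algHom (Ideal.span ((X : σ → MvPolynomial σ ℂ) '' S))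
      (AlgHom.id ℂ _) φ (fun k => ?_) f
    · simpa [hf] using this
    · by_cases hk : k ∈ S
      · have hX : (X k : MvPolynomial σ ℂ) ∈ Ideal.span (X '' S) :=
          Ideal.subset_span ⟨k, hk, rfl⟩
        simpa [hφ, hk] using hX
      · simp [hφ, hk]

lemma isRegular_ofFn_X_succ : RingTheory.Sequence.IsRegular (MvPolynomial (Fin (n + 1)) ℂ)
    (List.ofFn fun j : Fin n => (X j.succ : MvPolynomial (Fin (n + 1)) ℂ)) := by
  classical
  refine ⟨⟨fun i hi => ?_⟩, ?_⟩
  · rw [isSMulRegular_quotient_iff_mem_of_smul_mem]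
    intro f hf
    let S : Set (Fin (n + 1)) := {k | ∃ j : Fin n, (j : ℕ) < i ∧ j.succ = k}
    have hS : Ideal.ofList ((List.ofFn fun j : Fin n =>
        (X j.succ : MvPolynomial (Fin (n + 1)) ℂ)).take i) = Ideal.span (X '' S) := by
      rw [Ideal.ofList]
      congr 1
      ext a
      simp only [Set.mem_ofPred_eq, List.mem_take_iff_getElem, Set.mem_image, S]
      constructor
      · rintro ⟨j, hj, rfl⟩
        rw [List.length_ofFn] at hj
        exact ⟨_, ⟨⟨j, by omega⟩, by simp; omega, rfl⟩, by simp⟩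
      · rintro ⟨_, ⟨j, hj, rfl⟩, rfl⟩
        exact ⟨j, by simp; omega, by simp⟩
    have hi' : i < n := by simpa using hi
    have hnot : (Fin.succ ⟨i, hi'⟩ : Fin (n + 1)) ∉ S := by
      rintro ⟨j, hj, he⟩
      rw [Fin.succ_inj] at he
      subst he
      simp at hj
    rw [hS, smul_eq_mul, Ideal.mul_top, mem_span_X_image_iff_aeval_eq_zero] at hf ⊢
    rw [smul_eq_mul, List.getElem_ofFn, map_mul, aeval_X, if_neg hnot] at hf
    exact (mul_eq_zero.mp hf).resolve_left (X_ne_zero _)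
  · rw [smul_eq_mul, Ideal.mul_top]
    have : Ideal.ofList (List.ofFn fun j : Fin n =>
        (X j.succ : MvPolynomial (Fin (n + 1)) ℂ)) = lineIdeal n := by
      rw [Ideal.ofList]; congr 1; ext; simp
    rw [this]
    exact (Ideal.IsPrime.ne_top inferInstance).symm

/-- The endomorphism of `ℂ[x, y₁, …, yₙ]` over `ℂ[x]` that acts on the `yⱼ` by a matrix
over `ℂ[x]`. -/
noncomputable def linSubst
    (A : (Fin n → Polynomial ℂ) →ₗ[Polynomial ℂ] (Fin n → Polynomial ℂ)) :
    MvPolynomial (Fin (n + 1)) ℂ →ₐ[ℂ] MvPolynomial (Fin (n + 1)) ℂ :=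
  aeval (Fin.cons (X 0) fun j => linComb n (A (Pi.single j 1)))

lemma linSubst_X_zero (A : (Fin n → Polynomial ℂ) →ₗ[Polynomial ℂ] (Fin n → Polynomial ℂ)) :
    linSubst A (X 0) = X 0 := by
  simp [linSubst]

lemma linSubst_X_succ (A : (Fin n → Polynomial ℂ) →ₗ[Polynomial ℂ] (Fin n → Polynomial ℂ))
    (j : Fin n) : linSubst A (X j.succ) = linComb n (A (Pi.single j 1)) := by
  simp [linSubst]

lemma linSubst_lineIncl
    (A : (Fin n → Polynomial ℂ) →ₗ[Polynomial ℂ] (Fin n → Polynomial ℂ)) (c : Polynomial ℂ) :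
    linSubst A (lineIncl n c) = lineIncl n c := by
  have : (linSubst A).comp (lineIncl n) = lineIncl n := by
    ext1
    simp [lineIncl, linSubst_X_zero]
  exact DFunLike.congr_fun this c

lemma linSubst_linComb
    (A : (Fin n → Polynomial ℂ) →ₗ[Polynomial ℂ] (Fin n → Polynomial ℂ))
    (v : Fin n → Polynomial ℂ) : linSubst A (linComb n v) = linComb n (A v) := by
  conv_rhs => rw [pi_eq_sum_univ' v]
  simp only [map_sum, map_smul, LinearMap.map_smulₛₗ]
  rw [linComb_apply, map_sum]
  refine Finset.sum_congr rfl fun j _ => ?_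
  rw [map_mul, linSubst_lineIncl, linSubst_X_succ]
  rfl

lemma linSubst_comp_of_comp_eq_id
    {A B : (Fin n → Polynomial ℂ) →ₗ[Polynomial ℂ] (Fin n → Polynomial ℂ)}
    (hAB : A ∘ₗ B = LinearMap.id) : (linSubst A).comp (linSubst B) = AlgHom.id ℂ _ := by
  refine MvPolynomial.algHom_ext fun i => ?_
  refine Fin.cases ?_ (fun j => ?_) i
  · simp [linSubst_X_zero]
  · have : A (B (Pi.single j 1)) = Pi.single j 1 := LinearMap.congr_fun hAB _
    rw [AlgHom.comp_apply, linSubst_X_succ, linSubst_linComb, this, linComb_apply,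
      Finset.sum_eq_single j]
    · simp
    · intro k _ hk
      simp [hk]
    · simp

lemma isRegular_ofFn_linComb
    (b : Module.Basis (Fin n) (Polynomial ℂ) (Fin n → Polynomial ℂ)) :
    RingTheory.Sequence.IsRegular (MvPolynomial (Fin (n + 1)) ℂ)
      (List.ofFn fun j => linComb n (b j)) := by
  let e : MvPolynomial (Fin (n + 1)) ℂ ≃ₐ[ℂ] MvPolynomial (Fin (n + 1)) ℂ :=
    AlgEquiv.ofAlgHom (linSubst b.equivFun.symm.toLinearMap) (linSubst b.equivFun.toLinearMap)
      (linSubst_comp_of_comp_eq_id (by ext1; simp)) (linSubst_comp_of_comp_eq_id (by simp))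
  have he : ∀ j, e (X j.succ) = linComb n (b j) := fun j => by
    change linSubst _ _ = _
    rw [linSubst_X_succ]
    simp
  refine (AddEquiv.isRegular_congr (e := e.toAddEquiv) ?_).mp (isRegular_ofFn_X_succ (n := n))
  rw [List.forall₂_iff_get]
  refine ⟨by simp, fun i h₁ h₂ x => ?_⟩
  rw [List.get_ofFn, List.get_ofFn, smul_eq_mul, smul_eq_mul]
  exact (map_mul e _ _).trans (congrArg (· * e x) (he _))

/-- An adapted basis for the row space of a `p × n` matrix of full rank over `ℂ[x]`. -/
lemma exists_basis_span_eq_smul {p : ℕ} (hpn : p ≤ n) {w : Fin p → Fin n → Polynomial ℂ}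
    (hw : LinearIndependent (Polynomial ℂ) w) :
    ∃ (b : Module.Basis (Fin n) (Polynomial ℂ) (Fin n → Polynomial ℂ)) (a : Fin p → Polynomial ℂ),
      (∀ i, a i ≠ 0) ∧
      Submodule.span (Polynomial ℂ) (Set.range w) =
        Submodule.span (Polynomial ℂ) (Set.range fun i => a i • b (Fin.castLE hpn i)) := by
  obtain ⟨m, o, hmo, bO, bN, a, hsnf⟩ := Submodule.exists_smith_normal_form_of_le
    (Pi.basisFun (Polynomial ℂ) (Fin n)) (Submodule.span (Polynomial ℂ) (Set.range w)) ⊤ le_top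
  obtain rfl : m = p := by
    have h1 := finrank_span_eq_card hw
    rw [Module.finrank_eq_card_basis bN] at h1
    simpa using h1
  obtain rfl : o = n := by
    have h1 := Module.finrank_eq_card_basis bO
    rw [finrank_top, Module.finrank_fin_fun] at h1
    simpa using h1.symm
  refine ⟨bO.map Submodule.topEquiv, a, fun i hi => ?_, ?_⟩
  · have := hsnf i
    rw [hi, zero_smul] at this
    exact bN.ne_zero i (Subtype.ext this)
  · have h1 := congrArg (Submodule.map (Submodule.subtype _)) bN.span_eq
    rw [Submodule.map_span, Submodule.map_subtype_top, ← Set.range_comp] at h1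
    rw [← h1]
    congr 2
    ext1 i
    simp [hsnf]

section Coordinates

variable {p : ℕ} {hpn : p ≤ n}
  {b : Module.Basis (Fin n) (Polynomial ℂ) (Fin n → Polynomial ℂ)} {a : Fin p → Polynomial ℂ}

lemma repr_eq_zero_of_mem_span {v : Fin n → Polynomial ℂ}
    (hv : v ∈ Submodule.span (Polynomial ℂ) (Set.range fun i => a i • b (Fin.castLE hpn i)))
    {j : Fin n} (hj : p ≤ j) : b.repr v j = 0 := by
  have hle : Submodule.span (Polynomial ℂ) (Set.range fun i => a i • b (Fin.castLE hpn i)) ≤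
      LinearMap.ker (b.coord j) := by
    rw [Submodule.span_le]
    rintro _ ⟨i, rfl⟩
    have hij : Fin.castLE hpn i ≠ j := by
      rintro rfl
      simp at hj
      omega
    simp [hij]
  exact hle hv

lemma prod_smul_mem_span_of_repr_eq_zero {v : Fin n → Polynomial ℂ}
    (hv : ∀ j : Fin n, p ≤ j → b.repr v j = 0) :
    (∏ i, a i) • v ∈
      Submodule.span (Polynomial ℂ) (Set.range fun i => a i • b (Fin.castLE hpn i)) := by
  rw [← b.sum_repr v, Finset.smul_sum]
  refine Submodule.sum_mem _ fun j _ => ?_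
  by_cases hj : p ≤ j
  · simp [hv j hj]
  · let i : Fin p := ⟨j, by omega⟩
    obtain ⟨c, hc⟩ := Finset.dvd_prod_of_mem a (Finset.mem_univ i)
    have : (∏ i, a i) • b.repr v j • b j =
        (c * b.repr v j) • a i • b (Fin.castLE hpn i) := by
      rw [show Fin.castLE hpn i = j from rfl, hc, smul_smul, smul_smul]
      congr 1
      ring
    rw [this]
    exact Submodule.smul_mem _ _ (Submodule.subset_span ⟨i, rfl⟩)

lemma repr_sum_smul_apply {R M ι κ : Type*} [CommRing R] [AddCommGroup M] [Module R M]
    [Fintype κ] (b : Module.Basis ι R M) {e : κ → ι} (he : Function.Injective e)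
    (c : κ → R) (i : κ) : b.repr (∑ j, c j • b (e j)) (e i) = c i := by
  classical
  simp [Finsupp.single_apply, he.eq_iff]

lemma repr_sum_smul_apply_of_notMem_range {R M ι κ : Type*} [CommRing R] [AddCommGroup M]
    [Module R M] [Fintype κ] (b : Module.Basis ι R M) {e : κ → ι} (c : κ → R) {k : ι}
    (hk : k ∉ Set.range e) : b.repr (∑ j, c j • b (e j)) k = 0 := by
  have : ∀ j, e j ≠ k := fun j hj => hk ⟨j, hj⟩
  simp [this]

end Coordinates

lemma mem_sq_sup_iff {h : Ideal (MvPolynomial (Fin (n + 1)) ℂ)} {ι : Type*} [Fintype ι]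
    {hs : ι → MvPolynomial (Fin (n + 1)) ℂ} (hhs : ∀ i, hs i ∈ lineIdeal n)
    (hhgen : h = Ideal.span (Set.range hs)) {f : MvPolynomial (Fin (n + 1)) ℂ}
    (hf : f ∈ lineIdeal n) :
    f ∈ lineIdeal n ^ 2 ⊔ h ↔
      linPart n f ∈ Submodule.span (Polynomial ℂ) (Set.range fun i => linPart n (hs i)) := by
  constructor
  · intro hf'
    obtain ⟨q, hq, r, hr, rfl⟩ := Submodule.mem_sup.mp hf'
    rw [map_add, linPart_eq_zero_of_mem_sq hq, zero_add]
    exact linPart_mem_span hhs (hhgen ▸ hr)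
  · intro hf'
    obtain ⟨c, hc⟩ := (Submodule.mem_span_range_iff_exists_fun _).mp hf'
    have hsum : ∑ i, lineIncl n (c i) * hs i ∈ h :=
      Ideal.sum_mem _ fun i _ =>
        Ideal.mul_mem_left _ _ (hhgen ▸ Ideal.subset_span ⟨i, rfl⟩)
    have hsum' : ∑ i, lineIncl n (c i) * hs i ∈ lineIdeal n :=
      Ideal.sum_mem _ fun i _ => Ideal.mul_mem_left _ _ (hhs i)
    rw [← sub_add_cancel f (∑ i, lineIncl n (c i) * hs i)]
    refine Submodule.add_mem_sup (mem_sq_of_linPart_eq_zero (sub_mem hf hsum') ?_) hsum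
    rw [map_sub, map_sum, ← hc, sub_eq_zero]
    refine Finset.sum_congr rfl fun i _ => ?_
    rw [linPart_mul_of_mem _ (hhs i), lineProj_lineIncl]

lemma mk_mem_nonZeroDivisors_iff {β : MvPolynomial (Fin (n + 1)) ℂ} :
    Ideal.Quotient.mk (lineIdeal n) β ∈ nonZeroDivisors (MvPolynomial (Fin (n + 1)) ℂ ⧸ lineIdeal n)
      ↔ lineProj n β ≠ 0 := by
  rw [mem_nonZeroDivisors_iff_ne_zero, Ne, Ideal.Quotient.eq_zero_iff_mem, mem_lineIdeal_iff]

/-- Torsion in the conormal module is detected by the trailing coordinates of the linear part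
in an adapted basis. -/
lemma mem_torsionSet_iff {h : Ideal (MvPolynomial (Fin (n + 1)) ℂ)} {p : ℕ} (hpn : p ≤ n)
    {hs : Fin p → MvPolynomial (Fin (n + 1)) ℂ} (hhs : ∀ i, hs i ∈ lineIdeal n)
    (hhgen : h = Ideal.span (Set.range hs))
    {b : Module.Basis (Fin n) (Polynomial ℂ) (Fin n → Polynomial ℂ)} {a : Fin p → Polynomial ℂ}
    (ha : ∀ i, a i ≠ 0)
    (hspan : Submodule.span (Polynomial ℂ) (Set.range fun i => linPart n (hs i)) =
      Submodule.span (Polynomial ℂ) (Set.range fun i => a i • b (Fin.castLE hpn i)))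
    {f : MvPolynomial (Fin (n + 1)) ℂ} :
    f ∈ torsionSet h (lineIdeal n) ↔
      f ∈ lineIdeal n ∧ ∀ j : Fin n, p ≤ j → b.repr (linPart n f) j = 0 := by
  refine and_congr_right fun hf => ?_
  constructor
  · rintro ⟨β, hβ, hβf⟩ j hj
    rw [mem_sq_sup_iff hhs hhgen (Ideal.mul_mem_left _ _ hf), linPart_mul_of_mem _ hf,
      hspan] at hβf
    have := repr_eq_zero_of_mem_span hβf hj
    rw [map_smul, Finsupp.smul_apply, smul_eq_mul] at this
    exact (mul_eq_zero.mp this).resolve_left (mk_mem_nonZeroDivisors_iff.mp hβ)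
  · intro hv
    refine ⟨lineIncl n (∏ i, a i), ?_, ?_⟩
    · rw [mk_mem_nonZeroDivisors_iff, lineProj_lineIncl]
      exact Finset.prod_ne_zero_iff.mpr fun i _ => ha i
    · rw [mem_sq_sup_iff hhs hhgen (Ideal.mul_mem_left _ _ hf), linPart_mul_of_mem _ hf,
        lineProj_lineIncl, hspan]
      exact prod_smul_mem_span_of_repr_eq_zero hv

lemma derivation_mem_of_mem_sq {k O : Type*} [CommRing k] [CommRing O] [Algebra k O]
    {g : Ideal O} (D : Derivation k O O) {q : O} (hq : q ∈ g ^ 2) : D q ∈ g := by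
  rw [sq] at hq
  induction hq using Submodule.mul_induction_on' with
  | mem_mul_mem a ha b hb =>
    rw [Derivation.leibniz]
    exact add_mem (Ideal.mul_mem_right _ _ ha) (Ideal.mul_mem_right _ _ hb)
  | add a _ b _ ha hb => rw [map_add]; exact add_mem ha hb

lemma torsionSet_subset_primitiveIdeal {k O : Type*} [CommRing k] [CommRing O] [Algebra k O]
    {h g : Ideal O} (hle : h ≤ g) : torsionSet h g ⊆ primitiveIdeal k h g := by
  rintro f ⟨hf, β, hβ, hβf⟩
  refine ⟨hf, fun xi hxi => ?_⟩
  have hmem : xi (β * f) ∈ g := by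
    obtain ⟨q, hq, r, hr, hqr⟩ := Submodule.mem_sup.mp hβf
    rw [← hqr, map_add]
    exact add_mem (derivation_mem_of_mem_sq xi hq) (hle (hxi r hr))
  rw [Derivation.leibniz, smul_eq_mul, smul_eq_mul,
    Ideal.add_mem_iff_left _ (Ideal.mul_mem_right _ _ hf)] at hmem
  rw [← Ideal.Quotient.eq_zero_iff_mem, map_mul] at hmem
  exact Ideal.Quotient.eq_zero_iff_mem.mp
    ((mul_left_mem_nonZeroDivisors_eq_zero_iff hβ).mp hmem)

lemma derivation_sum_apply {k O ι : Type*} [CommRing k] [CommRing O] [Algebra k O]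
    (s : Finset ι) (D : ι → Derivation k O O) (f : O) : (∑ i ∈ s, D i) f = ∑ i ∈ s, D i f := by
  have h1 := map_sum (Derivation.coeFnAddMonoidHom : Derivation k O O →+ (O → O)) D s
  have h2 := congrFun h1 f
  rwa [Finset.sum_apply] at h2

/-- Given derivations `D₁, …, Dₚ` and `E`, the determinantal derivation
`det (Dₖ hᵢ) • E - ∑ₖ (adj (Dₖ hᵢ) · E h)ₖ • Dₖ`, which annihilates `h₁, …, hₚ`. -/
noncomputable def determinantalDerivation {k O : Type*} [CommRing k] [CommRing O] [Algebra k O]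
    {p : ℕ} (D : Fin p → Derivation k O O) (E : Derivation k O O) (hs : Fin p → O) :
    Derivation k O O :=
  (Matrix.of fun i l => D l (hs i)).det • E -
    ∑ l, ((Matrix.of fun i l => D l (hs i)).adjugate.mulVec fun i => E (hs i)) l • D l

lemma determinantalDerivation_apply {k O : Type*} [CommRing k] [CommRing O] [Algebra k O]
    {p : ℕ} (D : Fin p → Derivation k O O) (E : Derivation k O O) (hs : Fin p → O) (f : O) :
    determinantalDerivation D E hs f = (Matrix.of fun i l => D l (hs i)).det * E f -
      ∑ l, ((Matrix.of fun i l => D l (hs i)).adjugate.mulVec fun i => E (hs i)) l * D l f := by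
  simp [determinantalDerivation, derivation_sum_apply]

lemma determinantalDerivation_apply_self {k O : Type*} [CommRing k] [CommRing O] [Algebra k O]
    {p : ℕ} (D : Fin p → Derivation k O O) (E : Derivation k O O) (hs : Fin p → O) (i : Fin p) :
    determinantalDerivation D E hs (hs i) = 0 := by
  rw [determinantalDerivation_apply, sub_eq_zero]
  set B : Matrix (Fin p) (Fin p) O := Matrix.of fun i l => D l (hs i)
  have h1 : B.mulVec (B.adjugate.mulVec fun i => E (hs i)) = B.det • fun i => E (hs i) := by
    rw [Matrix.mulVec_mulVec, Matrix.mul_adjugate, Matrix.smul_mulVec, Matrix.one_mulVec]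
  have h2 := congrFun h1 i
  rw [Pi.smul_apply, smul_eq_mul] at h2
  rw [← h2, Matrix.mulVec, dotProduct]
  exact Finset.sum_congr rfl fun l _ => mul_comm _ _

lemma preservesIdeal_span_of_forall_eq_zero {k O ι : Type*} [CommRing k] [CommRing O]
    [Algebra k O] {hs : ι → O} {D : Derivation k O O} (hD : ∀ i, D (hs i) = 0) :
    PreservesIdeal (Ideal.span (Set.range hs)) D := by
  intro x hx
  induction hx using Submodule.span_induction with
  | mem x hx =>
    obtain ⟨i, rfl⟩ := hx
    rw [hD]
    exact zero_mem _
  | zero => rw [map_zero]; exact zero_mem _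
  | add a b _ _ ha hb => rw [map_add]; exact add_mem ha hb
  | smul a x hx ih =>
    rw [smul_eq_mul, Derivation.leibniz]
    exact add_mem (Ideal.mul_mem_left _ _ ih) (Ideal.mul_mem_right _ _ hx)

/-- The derivation dual to the `j`-th vector of a basis of `ℂ[x]ⁿ`. -/
noncomputable def coordDerivation
    (b : Module.Basis (Fin n) (Polynomial ℂ) (Fin n → Polynomial ℂ)) (j : Fin n) :
    Derivation ℂ (MvPolynomial (Fin (n + 1)) ℂ) (MvPolynomial (Fin (n + 1)) ℂ) :=
  ∑ k, lineIncl n (b.repr (Pi.single k 1) j) • pderiv k.succ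

lemma lineProj_coordDerivation
    (b : Module.Basis (Fin n) (Polynomial ℂ) (Fin n → Polynomial ℂ)) (j : Fin n)
    (f : MvPolynomial (Fin (n + 1)) ℂ) :
    lineProj n (coordDerivation b j f) = b.repr (linPart n f) j := by
  conv_rhs => rw [pi_eq_sum_univ' (linPart n f)]
  simp [coordDerivation, derivation_sum_apply, linPart_apply, mul_comm]

lemma repr_linPart_eq_zero_of_mem_primitiveIdeal {p : ℕ} (hpn : p ≤ n)
    {hs : Fin p → MvPolynomial (Fin (n + 1)) ℂ}
    (hli : LinearIndependent (Polynomial ℂ) fun i => linPart n (hs i))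
    {b : Module.Basis (Fin n) (Polynomial ℂ) (Fin n → Polynomial ℂ)}
    (hzero : ∀ i, ∀ j : Fin n, p ≤ j → b.repr (linPart n (hs i)) j = 0)
    {f : MvPolynomial (Fin (n + 1)) ℂ}
    (hf : f ∈ primitiveIdeal ℂ (Ideal.span (Set.range hs)) (lineIdeal n))
    {j : Fin n} (hj : p ≤ j) : b.repr (linPart n f) j = 0 := by
  let D : Fin p → Derivation ℂ (MvPolynomial (Fin (n + 1)) ℂ) (MvPolynomial (Fin (n + 1)) ℂ) :=
    fun l => coordDerivation b (Fin.castLE hpn l)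
  have hmem := hf.2 (determinantalDerivation D (coordDerivation b j) hs)
    (preservesIdeal_span_of_forall_eq_zero fun i => determinantalDerivation_apply_self D _ hs i)
  rw [mem_lineIdeal_iff, determinantalDerivation_apply, map_sub, map_mul, map_sum,
    lineProj_coordDerivation, Finset.sum_eq_zero, sub_zero] at hmem
  · refine (mul_eq_zero.mp hmem).resolve_left fun hdet => ?_
    rw [AlgHom.map_det, ← Matrix.exists_vecMul_eq_zero_iff] at hdet
    obtain ⟨v, hv, hvB⟩ := hdet
    refine hv (funext (Fintype.linearIndependent_iff.mp hli v ?_))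
    apply b.repr.injective
    ext1 m
    by_cases hm : p ≤ m
    · simp [hzero _ m hm]
    · have := congrFun hvB ⟨m, by omega⟩
      simpa [Matrix.vecMul, dotProduct, D, lineProj_coordDerivation] using this
  · intro l _
    rw [map_mul, Matrix.mulVec, dotProduct, map_sum, Finset.sum_eq_zero, zero_mul]
    intro i _
    rw [map_mul, lineProj_coordDerivation, hzero i j hj, mul_zero]

lemma span_range_eq_sup_tailFam {O : Type*} [CommRing O] {p : ℕ} (hpn : p ≤ n) (ys : Fin n → O) :
    Ideal.span (Set.range ys) =
      Ideal.span (Set.range fun j : Fin p => ys (Fin.castLE hpn j)) ⊔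
        Ideal.span (Set.range (tailFam ys p)) := by
  rw [← Ideal.span_union]
  congr 1
  ext y
  constructor
  · rintro ⟨j, rfl⟩
    by_cases hj : p ≤ j
    · refine Or.inr ⟨⟨j - p, by omega⟩, ?_⟩
      simp [tailFam, Nat.add_sub_cancel' hj]
    · exact Or.inl ⟨⟨j, by omega⟩, rfl⟩
  · rintro (⟨j, rfl⟩ | ⟨j, rfl⟩)
    · exact ⟨_, rfl⟩
    · exact ⟨_, rfl⟩

lemma sup_sq_le_sup_sq {O : Type*} [CommRing O] (I J : Ideal O) : (I ⊔ J) ^ 2 ≤ I ⊔ J ^ 2 := by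
  rw [sq, Ideal.sup_mul, Ideal.mul_sup J I J, sq]
  exact sup_le (le_sup_of_le_left (Ideal.mul_le.mpr fun a ha b _ => Ideal.mul_mem_right b _ ha))
    (sup_le (le_sup_of_le_left (Ideal.mul_le.mpr fun a _ b hb => Ideal.mul_mem_left _ a hb))
      le_sup_right)

lemma span_range_linComb (b : Module.Basis (Fin n) (Polynomial ℂ) (Fin n → Polynomial ℂ)) :
    Ideal.span (Set.range fun j => linComb n (b j)) = lineIdeal n := by
  apply le_antisymm
  · rw [Ideal.span_le]
    rintro _ ⟨j, rfl⟩
    exact linComb_mem _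
  · rw [Ideal.span_le]
    rintro _ ⟨k, rfl⟩
    have h1 : X k.succ = linComb n (Pi.single k 1) := by
      rw [linComb_apply, Finset.sum_eq_single k]
      · simp
      · intro j _ hj
        simp [hj]
      · simp
    simp only [SetLike.mem_coe]
    rw [h1, ← b.sum_repr (Pi.single k 1), map_sum]
    refine Ideal.sum_mem _ fun j _ => ?_
    rw [LinearMap.map_smulₛₗ, smul_eq_mul]
    exact Ideal.mul_mem_left _ _ (Ideal.subset_span (Set.mem_range_self j))

lemma linPart_sum_mul_linComb {ι : Type*} [Fintype ι]
    (c : ι → MvPolynomial (Fin (n + 1)) ℂ) (v : ι → Fin n → Polynomial ℂ) :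
    linPart n (∑ j, c j * linComb n (v j)) = ∑ j, lineProj n (c j) • v j := by
  rw [map_sum]
  refine Finset.sum_congr rfl fun j _ => ?_
  rw [linPart_mul_of_mem _ (linComb_mem _), linPart_linComb]

end LineGeometry

/-- Lines on a variety with isolated complete intersection singularity: for the line
`Σ = x`-axis defined by `g = (y₁, …, yₙ)` in `ℂ[x, y₁, …, yₙ]` lying on `X = V(h)` with
an isolated complete intersection singularity at the origin, there is a regular sequence
`y′₁, …, y′ₙ` generating `g` such that the images of `y′₁, …, y′_p` generate `T(M)`, the
images of `y′_{p+1}, …, y′ₙ` freely generate `N = M/T(M)` of rank `n - p`, and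
`∫_h g = (y′₁, …, y′_p) + (y′_{p+1}, …, y′ₙ)²`. -/
theorem statement19 {n : ℕ}
    (g : Ideal (MvPolynomial (Fin (n + 1)) ℂ))
    (hgdef : g = Ideal.span (Set.range fun i : Fin n => MvPolynomial.X i.succ))
    (h : Ideal (MvPolynomial (Fin (n + 1)) ℂ)) (hle : h ≤ g)
    {p : ℕ} (hpn : p ≤ n)
    (hs : Fin p → MvPolynomial (Fin (n + 1)) ℂ)
    (hhseq : RingTheory.Sequence.IsRegular (MvPolynomial (Fin (n + 1)) ℂ) (List.ofFn hs))
    (hhgen : h = Ideal.span (Set.range hs))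
    (hiso : ∀ Q : Ideal (MvPolynomial (Fin (n + 1)) ℂ), Q.IsPrime → h ≤ Q →
      Q ≠ Ideal.span (Set.range MvPolynomial.X) → regularAtImage h Q)
    (hsing : ¬ regularAtImage h (Ideal.span (Set.range MvPolynomial.X)) ∨ p < n + 1) :
    ∃ ys : Fin n → MvPolynomial (Fin (n + 1)) ℂ,
      RingTheory.Sequence.IsRegular (MvPolynomial (Fin (n + 1)) ℂ) (List.ofFn ys) ∧
      g = Ideal.span (Set.range ys) ∧
      (∀ j : Fin p, ys (Fin.castLE hpn j) ∈ torsionSet h g) ∧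
      (∀ f ∈ torsionSet h g, ∃ c : Fin p → MvPolynomial (Fin (n + 1)) ℂ,
        f - ∑ j, c j * ys (Fin.castLE hpn j) ∈ g ^ 2 ⊔ h) ∧
      (∀ f ∈ g, ∃ c : Fin (n - p) → MvPolynomial (Fin (n + 1)) ℂ,
        f - ∑ j, c j * tailFam ys p j ∈ torsionSet h g) ∧
      (∀ c : Fin (n - p) → MvPolynomial (Fin (n + 1)) ℂ,
        (∑ j, c j * tailFam ys p j) ∈ torsionSet h g → ∀ j, c j ∈ g) ∧
      primitiveIdeal ℂ h g =
        Ideal.span (Set.range fun j : Fin p => ys (Fin.castLE hpn j)) ⊔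
          (Ideal.span (Set.range (tailFam ys p))) ^ 2 := by
  subst hgdef
  have hreg := hiso _ LineGeometry.lineIdeal_isPrime hle LineGeometry.lineIdeal_ne_span_range_X
  have hhs : ∀ i, hs i ∈ LineGeometry.lineIdeal n := fun i =>
    hle (hhgen ▸ Ideal.subset_span ⟨i, rfl⟩)
  have hli := LineGeometry.linearIndependent_linPart hle hhseq hhgen hreg
  obtain ⟨b, a, ha, hspan⟩ := LineGeometry.exists_basis_span_eq_smul hpn hli
  have htors := fun f => LineGeometry.mem_torsionSet_iff hpn hhs hhgen ha hspan (f := f)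
  let ys : Fin n → MvPolynomial (Fin (n + 1)) ℂ := fun j => LineGeometry.linComb n (b j)
  have hg : Ideal.span (Set.range ys) = LineGeometry.lineIdeal n :=
    LineGeometry.span_range_linComb b
  have hys : ∀ j, ys j ∈ LineGeometry.lineIdeal n := fun j => LineGeometry.linComb_mem _
  let e : Fin (n - p) → Fin n := fun j => ⟨p + j, by omega⟩
  have he : Function.Injective e := fun i j hij => by
    simpa [e, Fin.ext_iff] using hij
  have htail : ∀ (c : Fin (n - p) → MvPolynomial (Fin (n + 1)) ℂ) (i : Fin (n - p)),
      b.repr (LineGeometry.linPart n (∑ j, c j * tailFam ys p j)) (e i) =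
        LineGeometry.lineProj n (c i) := fun c i => by
    have := LineGeometry.linPart_sum_mul_linComb c fun j => b (e j)
    exact (congrArg (fun v => b.repr v (e i)) this).trans
      (LineGeometry.repr_sum_smul_apply b he _ i)
  have hhead : ∀ j : Fin p, ys (Fin.castLE hpn j) ∈ torsionSet h (LineGeometry.lineIdeal n) := by
    intro j
    refine (htors _).mpr ⟨hys _, fun k hk => ?_⟩
    have hjk : Fin.castLE hpn j ≠ k := by
      rintro rfl
      simp at hk
      omega
    rw [LineGeometry.linPart_linComb, b.repr_self, Finsupp.single_eq_of_ne' hjk]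
  have hdecomp : ∀ f ∈ torsionSet h (LineGeometry.lineIdeal n),
      ∃ c : Fin p → MvPolynomial (Fin (n + 1)) ℂ,
        f - ∑ j, c j * ys (Fin.castLE hpn j) ∈ LineGeometry.lineIdeal n ^ 2 := by
    intro f hf
    obtain ⟨hfg, hf0⟩ := (htors f).mp hf
    refine ⟨fun j => LineGeometry.lineIncl n
      (b.repr (LineGeometry.linPart n f) (Fin.castLE hpn j)), ?_⟩
    refine LineGeometry.mem_sq_of_linPart_eq_zero
      (sub_mem hfg (Ideal.sum_mem _ fun j _ => Ideal.mul_mem_left _ _ (hys _))) ?_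
    rw [map_sub, LineGeometry.linPart_sum_mul_linComb]
    simp only [LineGeometry.lineProj_lineIncl]
    apply b.repr.injective
    ext1 k
    rw [map_sub, Finsupp.sub_apply, map_zero, Finsupp.zero_apply, sub_eq_zero]
    by_cases hk : p ≤ k
    · rw [hf0 k hk, LineGeometry.repr_sum_smul_apply_of_notMem_range]
      rintro ⟨j, rfl⟩
      simp at hk
      omega
    · exact (LineGeometry.repr_sum_smul_apply b (Fin.castLE_injective hpn)
        (fun j => b.repr (LineGeometry.linPart n f) (Fin.castLE hpn j)) ⟨k, by omega⟩).symm
  refine ⟨ys, LineGeometry.isRegular_ofFn_linComb b, hg.symm, hhead, ?_, ?_, ?_, ?_⟩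
  · intro f hf
    obtain ⟨c, hc⟩ := hdecomp f hf
    exact ⟨c, Ideal.mem_sup_left hc⟩
  · intro f hf
    refine ⟨fun j => LineGeometry.lineIncl n (b.repr (LineGeometry.linPart n f) (e j)),
      (htors _).mpr ⟨sub_mem hf (Ideal.sum_mem _ fun j _ =>
        Ideal.mul_mem_left _ _ (hys (e j))), fun k hk => ?_⟩⟩
    obtain ⟨i, rfl⟩ : ∃ i, e i = k :=
      ⟨⟨k - p, by omega⟩, Fin.ext (Nat.add_sub_cancel' hk)⟩
    rw [map_sub, map_sub, Finsupp.sub_apply, htail, LineGeometry.lineProj_lineIncl, sub_self]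
  · intro c hc j
    rw [LineGeometry.mem_lineIdeal_iff, ← htail]
    exact ((htors _).mp hc).2 (e j) (Nat.le_add_right p j)
  · apply le_antisymm
    · intro f hf
      have hft : f ∈ torsionSet h (LineGeometry.lineIdeal n) := by
        refine (htors f).mpr ⟨hf.1, fun j hj => ?_⟩
        refine LineGeometry.repr_linPart_eq_zero_of_mem_primitiveIdeal hpn hli (fun i j hj => ?_)
          (hhgen ▸ hf) hj
        exact LineGeometry.repr_eq_zero_of_mem_span
          (hspan.le (Submodule.subset_span ⟨i, rfl⟩)) hj
      obtain ⟨c, hc⟩ := hdecomp f hft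
      rw [← sub_add_cancel f (∑ j, c j * ys (Fin.castLE hpn j))]
      refine add_mem ?_ (Ideal.mem_sup_left (Ideal.sum_mem _ fun j _ =>
        Ideal.mul_mem_left _ _ (Ideal.subset_span ⟨j, rfl⟩)))
      rw [← hg, LineGeometry.span_range_eq_sup_tailFam hpn ys] at hc
      exact LineGeometry.sup_sq_le_sup_sq _ _ hc
    · have hsub := LineGeometry.torsionSet_subset_primitiveIdeal (k := ℂ) hle
      refine sup_le ?_ ?_
      · rw [Ideal.span_le]
        rintro _ ⟨j, rfl⟩
        exact hsub (hhead j)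
      · intro f hf
        have hf2 : f ∈ LineGeometry.lineIdeal n ^ 2 := by
          refine Ideal.pow_right_mono ?_ 2 hf
          rw [← hg, LineGeometry.span_range_eq_sup_tailFam hpn ys]
          exact le_sup_right
        exact ⟨Ideal.pow_le_self two_ne_zero hf2,
          fun xi _ => LineGeometry.derivation_mem_of_mem_sq xi hf2⟩
end
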